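/- arXiv:1110.4059 — 3 statements merged into one kernel-verified Lean document; each statement's English description precedes it below -/
import Mathlib

section
/- Let n ≥ 0 and let v_0, …, v_{n+2} ∈ ℝ² with v_i = (p(a + i·b), q(a + i·b)), where p, q ∈ ℝ[t] are polynomials of degree at most 2 such that {p, q, 1} are linearly independent in ℝ[t], and a, b ∈ ℝ with b ≠ 0. Let f_i := e_0 + e_1 + ⋯ + e_i ∈ ℝ^{n+3} (partial sums of the standard basis vectors). Then for any two triangulations T and T′ of the point configuration {v_0, …, v_{n+2}}, the GKZ vectors have equal Euclidean norm: ‖GKZ(T)‖ = ‖GKZ(T′)‖. In particular, all vertices of the secondary polytope conv{GKZ(T) : T a triangulation} lie on a common sphere centered at the origin. -/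
open MeasureTheory

/-- Area (2-dimensional Lebesgue measure) of the convex hull of the points
indexed by `σ`. -/
noncomputable def triArea {m : ℕ} (v : Fin m → ℝ × ℝ) (σ : Finset (Fin m)) : ℝ :=
  (volume (convexHull ℝ (v '' ↑σ))).toReal

/-- `T` is a triangulation of the planar point configuration `v`:
a finite set of affinely independent triples whose convex hulls cover the
convex hull of the configuration, any two of which meet in a common
(extreme) face of each. -/
def IsTriangulation {m : ℕ} (v : Fin m → ℝ × ℝ) (T : Finset (Finset (Fin m))) : Prop :=
  (∀ σ ∈ T, σ.card = 3 ∧ AffineIndependent ℝ (fun i : {x // x ∈ σ} => v i.1)) ∧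
  (⋃ σ ∈ T, convexHull ℝ (v '' ↑σ)) = convexHull ℝ (Set.range v) ∧
  ∀ σ ∈ T, ∀ τ ∈ T,
    IsExtreme ℝ (convexHull ℝ (v '' ↑σ)) (convexHull ℝ (v '' ↑σ) ∩ convexHull ℝ (v '' ↑τ)) ∧
    IsExtreme ℝ (convexHull ℝ (v '' ↑τ)) (convexHull ℝ (v '' ↑σ) ∩ convexHull ℝ (v '' ↑τ))

/-- The GKZ vector of a triangulation `T` with respect to the vectors `f i`:
`GKZ(T) = ∑ i (∑ {σ ∈ T : i ∈ σ} vol σ) • f i`. -/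
noncomputable def GKZ {m : ℕ} {E : Type*} [AddCommGroup E] [Module ℝ E]
    (v : Fin m → ℝ × ℝ) (f : Fin m → E) (T : Finset (Finset (Fin m))) : E :=
  ∑ i, (∑ σ ∈ T.filter (fun σ => i ∈ σ), triArea v σ) • f i

section comb
open scoped InnerProductSpace

variable {N : ℕ}

/-- triangles of `T` with all vertices between `i` and `k` -/
def gkzSub (T : Finset (Finset (Fin N))) (i k : Fin N) : Finset (Finset (Fin N)) :=
  T.filter (fun σ => ∀ r ∈ σ, i ≤ r ∧ r ≤ k)

lemma gkz_noncross_split (T : Finset (Finset (Fin N)))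
    (h3 : ∀ σ ∈ T, σ.card = 3)
    (hnc : ∀ σ ∈ T, ∀ τ ∈ T, ∀ a b c d : Fin N, a < b → b < c → c < d →
      a ∈ σ → c ∈ σ → b ∈ τ → d ∈ τ → False)
    (i j k : Fin N) (hij : i < j) (hjk : j < k) (hT : {i, j, k} ∈ T)
    (σ : Finset (Fin N)) (hσ : σ ∈ T) (hne : σ ≠ {i, j, k})
    (hb : ∀ r ∈ σ, i ≤ r ∧ r ≤ k) :
    (∀ r ∈ σ, i ≤ r ∧ r ≤ j) ∨ (∀ r ∈ σ, j ≤ r ∧ r ≤ k) := by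
  by_contra hcon
  push Not at hcon
  obtain ⟨⟨z, hz, hz'⟩, ⟨x, hx, hx'⟩⟩ := hcon
  have hzj : j < z := hz' (hb z hz).1
  have hxj : x < j := by
    by_contra hc
    exact absurd (hx' (not_lt.mp hc)) (not_lt.mpr (hb x hx).2)
  have hi : i ∈ ({i, j, k} : Finset (Fin N)) := by simp
  have hj : j ∈ ({i, j, k} : Finset (Fin N)) := by simp
  have hk : k ∈ ({i, j, k} : Finset (Fin N)) := by simp
  have hxi : x = i := by
    by_contra hc
    have : i < x := lt_of_le_of_ne (hb x hx).1 (Ne.symm hc)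
    exact hnc _ hT _ hσ i x j z this hxj hzj hi hj hx hz
  have hzk : z = k := by
    by_contra hc
    have : z < k := lt_of_le_of_ne (hb z hz).2 hc
    exact hnc _ hσ _ hT x j z k hxj hzj this hx hz hj hk
  subst hxi; subst hzk
  apply hne
  have hsub : σ ⊆ {x, j, z} := by
    intro y hy
    by_contra hc
    simp only [Finset.mem_insert, Finset.mem_singleton, not_or] at hc
    obtain ⟨h1, h2, h3⟩ := hc
    have hy1 : x < y := lt_of_le_of_ne (hb y hy).1 (Ne.symm h1)
    have hy2 : y < z := lt_of_le_of_ne (hb y hy).2 h3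
    rcases lt_or_gt_of_ne h2 with h | h
    · exact hnc _ hT _ hσ x y j z hy1 h hzj hi hj hy hz
    · exact hnc _ hσ _ hT x j y z hij h hy2 hx hy hj hk
  exact Finset.eq_of_subset_of_card_le hsub (by rw [h3 _ hσ, h3 _ hT])

lemma gkz_sub_eq (T : Finset (Finset (Fin N)))
    (h3 : ∀ σ ∈ T, σ.card = 3)
    (hnc : ∀ σ ∈ T, ∀ τ ∈ T, ∀ a b c d : Fin N, a < b → b < c → c < d →
      a ∈ σ → c ∈ σ → b ∈ τ → d ∈ τ → False)
    (i j k : Fin N) (hij : i < j) (hjk : j < k) (hT : {i, j, k} ∈ T)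
    {E : Type*} [AddCommMonoid E] (F : Finset (Fin N) → E) :
    ∑ σ ∈ gkzSub T i k, F σ =
      F {i, j, k} + (∑ σ ∈ gkzSub T i j, F σ + ∑ σ ∈ gkzSub T j k, F σ) := by
  have hdisj : Disjoint (gkzSub T i j) (gkzSub T j k) := by
    rw [Finset.disjoint_left]
    intro σ h1 h2
    simp only [gkzSub, Finset.mem_filter] at h1 h2
    have : σ ⊆ {j} := by
      intro r hr
      simp only [Finset.mem_singleton]
      exact le_antisymm (h1.2 r hr).2 (h2.2 r hr).1
    have := Finset.card_le_card this
    rw [h3 _ h1.1] at this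
    simp at this
  have hnot : ({i, j, k} : Finset (Fin N)) ∉ gkzSub T i j ∪ gkzSub T j k := by
    simp only [gkzSub, Finset.mem_union, Finset.mem_filter, not_or, not_and]
    constructor
    · intro _ h
      exact absurd (h k (by simp)).2 (not_le.mpr hjk)
    · intro _ h
      exact absurd (h i (by simp)).1 (not_le.mpr hij)
  rw [← Finset.sum_union hdisj, ← Finset.sum_insert hnot]
  congr 1
  ext σ
  simp only [Finset.mem_insert, Finset.mem_union, gkzSub, Finset.mem_filter]
  constructor
  · rintro ⟨h1, h2⟩
    by_cases hne : σ = {i, j, k}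
    · exact Or.inl hne
    · rcases gkz_noncross_split T h3 hnc i j k hij hjk hT σ h1 hne h2 with h | h
      · exact Or.inr (Or.inl ⟨h1, h⟩)
      · exact Or.inr (Or.inr ⟨h1, h⟩)
  · rintro (h | ⟨h1, h2⟩ | ⟨h1, h2⟩)
    · subst h
      refine ⟨hT, ?_⟩
      intro r hr
      simp only [Finset.mem_insert, Finset.mem_singleton] at hr
      rcases hr with rfl | rfl | rfl
      · exact ⟨le_rfl, (hij.trans hjk).le⟩
      · exact ⟨hij.le, hjk.le⟩
      · exact ⟨(hij.trans hjk).le, le_rfl⟩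
    · exact ⟨h1, fun r hr => ⟨(h2 r hr).1, (h2 r hr).2.trans hjk.le⟩⟩
    · exact ⟨h1, fun r hr => ⟨hij.le.trans (h2 r hr).1, (h2 r hr).2⟩⟩

lemma gkz_inner_left {E : Type*} [NormedAddCommGroup E] [InnerProductSpace ℝ E]
    (f : Fin N → E)
    (hf : ∀ i j, ⟪f i, f j⟫_ℝ = ((min (i : ℕ) (j : ℕ) : ℕ) : ℝ) + 1)
    (T : Finset (Finset (Fin N))) (h3 : ∀ σ ∈ T, σ.card = 3) (V : Finset (Fin N) → ℝ)
    (i k s : Fin N) (hs : s ≤ i) :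
    ⟪∑ σ ∈ gkzSub T i k, V σ • ∑ r ∈ σ, f r, f s⟫_ℝ
      = 3 * (∑ σ ∈ gkzSub T i k, V σ) * ((s : ℕ) + 1) := by
  rw [sum_inner, Finset.mul_sum, Finset.sum_mul]
  refine Finset.sum_congr rfl ?_
  intro σ hσ
  simp only [gkzSub, Finset.mem_filter] at hσ
  rw [real_inner_smul_left, sum_inner]
  have : ∑ r ∈ σ, ⟪f r, f s⟫_ℝ = ∑ r ∈ σ, (((s : ℕ) : ℝ) + 1) := by
    refine Finset.sum_congr rfl ?_
    intro r hr
    rw [hf, min_eq_right]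
    exact hs.trans (hσ.2 r hr).1
  rw [this, Finset.sum_const, h3 _ hσ.1]
  simp; ring

lemma gkz_inner_right {E : Type*} [NormedAddCommGroup E] [InnerProductSpace ℝ E]
    (f : Fin N → E)
    (hf : ∀ i j, ⟪f i, f j⟫_ℝ = ((min (i : ℕ) (j : ℕ) : ℕ) : ℝ) + 1)
    (T : Finset (Finset (Fin N))) (V : Finset (Fin N) → ℝ)
    (i k s : Fin N) (hs : k ≤ s) :
    ⟪∑ σ ∈ gkzSub T i k, V σ • ∑ r ∈ σ, f r, f s⟫_ℝ
      = ∑ σ ∈ gkzSub T i k, V σ * ∑ r ∈ σ, (((r : ℕ) : ℝ) + 1) := by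
  rw [sum_inner]
  refine Finset.sum_congr rfl ?_
  intro σ hσ
  simp only [gkzSub, Finset.mem_filter] at hσ
  rw [real_inner_smul_left, sum_inner]
  congr 1
  refine Finset.sum_congr rfl ?_
  intro r hr
  rw [hf, min_eq_left]
  exact (hσ.2 r hr).2.trans hs

lemma gkz_inner_cross {E : Type*} [NormedAddCommGroup E] [InnerProductSpace ℝ E]
    (f : Fin N → E)
    (hf : ∀ i j, ⟪f i, f j⟫_ℝ = ((min (i : ℕ) (j : ℕ) : ℕ) : ℝ) + 1)
    (T : Finset (Finset (Fin N))) (h3 : ∀ σ ∈ T, σ.card = 3) (V : Finset (Fin N) → ℝ)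
    (i j k : Fin N) :
    ⟪∑ σ ∈ gkzSub T i j, V σ • ∑ r ∈ σ, f r, ∑ σ ∈ gkzSub T j k, V σ • ∑ r ∈ σ, f r⟫_ℝ
      = (∑ σ ∈ gkzSub T i j, V σ * ∑ r ∈ σ, (((r : ℕ) : ℝ) + 1))
        * (3 * ∑ σ ∈ gkzSub T j k, V σ) := by
  rw [inner_sum, Finset.mul_sum, Finset.mul_sum]
  refine Finset.sum_congr rfl ?_
  intro σ hσ
  simp only [gkzSub, Finset.mem_filter] at hσ
  rw [real_inner_smul_right, inner_sum]
  have : ∀ s ∈ σ, ⟪∑ σ ∈ gkzSub T i j, V σ • ∑ r ∈ σ, f r, f s⟫_ℝ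
      = ∑ σ ∈ gkzSub T i j, V σ * ∑ r ∈ σ, (((r : ℕ) : ℝ) + 1) := by
    intro s hs
    exact gkz_inner_right f hf T V i j s (hσ.2 s hs).1
  rw [Finset.sum_congr rfl this, Finset.sum_const, h3 _ hσ.1]
  simp; ring

lemma gkz_comb {E : Type*} [NormedAddCommGroup E] [InnerProductSpace ℝ E]
    (f : Fin N → E)
    (hf : ∀ i j, ⟪f i, f j⟫_ℝ = ((min (i : ℕ) (j : ℕ) : ℕ) : ℝ) + 1)
    (T : Finset (Finset (Fin N))) (V : Finset (Fin N) → ℝ) (C : ℝ)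
    (hV : ∀ i j k : Fin N, i < j → j < k → V {i, j, k} =
      C * (((j : ℕ) : ℝ) - (i : ℕ)) * (((k : ℕ) : ℝ) - (i : ℕ)) * (((k : ℕ) : ℝ) - (j : ℕ)))
    (h3 : ∀ σ ∈ T, σ.card = 3)
    (hnc : ∀ σ ∈ T, ∀ τ ∈ T, ∀ a b c d : Fin N, a < b → b < c → c < d →
      a ∈ σ → c ∈ σ → b ∈ τ → d ∈ τ → False)
    (B : Fin N → Fin N → Prop)
    (hex : ∀ i k : Fin N, (i : ℕ) + 1 < (k : ℕ) → ((∃ σ ∈ T, i ∈ σ ∧ k ∈ σ) ∨ B i k) →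
      ∃ j, i < j ∧ j < k ∧ {i, j, k} ∈ T) :
    ∀ (m : ℕ) (i k : Fin N) (d : ℝ), (k : ℕ) = (i : ℕ) + (m + 1) → d = m + 1 →
      ((∃ σ ∈ T, i ∈ σ ∧ k ∈ σ) ∨ B i k) →
      (∑ σ ∈ gkzSub T i k, V σ = C * (d ^ 3 - d) / 3) ∧
      (∑ σ ∈ gkzSub T i k, V σ * ∑ r ∈ σ, (((r : ℕ) : ℝ) + 1)
        = C * (d ^ 3 - d) * ((i : ℕ) + d / 2 + 1)) ∧
      ⟪∑ σ ∈ gkzSub T i k, V σ • ∑ r ∈ σ, f r, ∑ σ ∈ gkzSub T i k, V σ • ∑ r ∈ σ, f r⟫_ℝ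
        = C ^ 2 * (((i : ℕ) + 1) * (d ^ 3 - d) ^ 2
          + (2 * d ^ 7 / 7 - 3 * d ^ 5 / 5 + d ^ 3 / 3 - 2 * d / 105)) := by
  intro m
  induction m using Nat.strong_induction_on with
  | _ m ih =>
  intro i k d hk hd hedge
  rcases Nat.eq_zero_or_pos m with rfl | hm
  · have hemp : gkzSub T i k = ∅ := by
      rw [Finset.eq_empty_iff_forall_notMem]
      intro σ hσ
      simp only [gkzSub, Finset.mem_filter] at hσ
      have hsub : σ ⊆ {i, k} := by
        intro r hr
        have h := hσ.2 r hr
        simp only [Finset.mem_insert, Finset.mem_singleton, Fin.ext_iff]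
        have h1 : (i : ℕ) ≤ r := h.1
        have h2 : (r : ℕ) ≤ k := h.2
        omega
      have h1 := Finset.card_le_card hsub
      have h2 := Finset.card_le_two (a := i) (b := k)
      rw [h3 _ hσ.1] at h1
      omega
    have hd1 : d = 1 := by simpa using hd
    subst hd1
    rw [hemp]
    norm_num
  · obtain ⟨j, hij, hjk, hjT⟩ := hex i k (by omega) hedge
    have hij' : (i : ℕ) < j := hij
    have hjk' : (j : ℕ) < k := hjk
    obtain ⟨m1, hm1⟩ : ∃ m1, (j : ℕ) = (i : ℕ) + (m1 + 1) := ⟨j - i - 1, by omega⟩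
    obtain ⟨m2, hm2⟩ : ∃ m2, (k : ℕ) = (j : ℕ) + (m2 + 1) := ⟨k - j - 1, by omega⟩
    obtain ⟨x, hx⟩ : ∃ x : ℝ, x = m1 + 1 := ⟨_, rfl⟩
    obtain ⟨y, hy⟩ : ∃ y : ℝ, y = m2 + 1 := ⟨_, rfl⟩
    obtain ⟨a1, b1, c1⟩ := ih m1 (by omega) i j x hm1 hx (Or.inl ⟨_, hjT, by simp, by simp⟩)
    obtain ⟨a2, b2, c2⟩ := ih m2 (by omega) j k y hm2 hy (Or.inl ⟨_, hjT, by simp, by simp⟩)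
    have hjR : ((j : ℕ) : ℝ) = (i : ℕ) + x := by rw [hm1, hx]; push_cast; ring
    have hkR : ((k : ℕ) : ℝ) = (i : ℕ) + x + y := by rw [hm2, hy]; push_cast; rw [hjR]
    have hdR : d = x + y := by
      have : ((k : ℕ) : ℝ) = (i : ℕ) + d := by rw [hk, hd]; push_cast; ring
      linarith
    have hVv : V {i, j, k} = C * x * (x + y) * y := by
      rw [hV i j k hij hjk, hkR, hjR]; ring
    have hsum3 : ∀ {G : Type _} [AddCommMonoid G] (F : Fin N → G),
        ∑ r ∈ ({i, j, k} : Finset (Fin N)), F r = F i + (F j + F k) := by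
      intro G _ F
      rw [Finset.sum_insert, Finset.sum_insert, Finset.sum_singleton]
      · simpa using hjk.ne
      · simp only [Finset.mem_insert, Finset.mem_singleton, not_or]
        exact ⟨hij.ne, (hij.trans hjk).ne⟩
    have hsum3' : ∑ r ∈ ({i, j, k} : Finset (Fin N)), (((r : ℕ) : ℝ) + 1)
        = (((i : ℕ) : ℝ) + 1) + ((((j : ℕ) : ℝ) + 1) + (((k : ℕ) : ℝ) + 1)) := by
      rw [Finset.sum_insert, Finset.sum_insert, Finset.sum_singleton]
      · simpa using hjk.ne
      · simp only [Finset.mem_insert, Finset.mem_singleton, not_or]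
        exact ⟨hij.ne, (hij.trans hjk).ne⟩
    refine ⟨?_, ?_, ?_⟩
    · rw [gkz_sub_eq T h3 hnc i j k hij hjk hjT, a1, a2, hVv, hdR]; ring
    · rw [gkz_sub_eq T h3 hnc i j k hij hjk hjT, b1, b2, hVv, hsum3', hdR, hkR, hjR]; ring
    · have cross := gkz_inner_cross f hf T h3 V i j k
      have l1 := gkz_inner_left f hf T h3 V i j i le_rfl
      have l2 := gkz_inner_right f hf T V i j j le_rfl
      have l3 := gkz_inner_right f hf T V i j k hjk.le
      have r1 := gkz_inner_left f hf T h3 V j k i hij.le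
      have r2 := gkz_inner_left f hf T h3 V j k j le_rfl
      have r3 := gkz_inner_right f hf T V j k k le_rfl
      rw [gkz_sub_eq T h3 hnc i j k hij hjk hjT, hsum3, hVv]
      rw [a1] at l1
      rw [a2] at r1 r2 cross
      rw [b1] at l2 l3 cross
      rw [b2] at r3
      generalize (∑ σ ∈ gkzSub T i j, V σ • ∑ r ∈ σ, f r) = X at *
      generalize (∑ σ ∈ gkzSub T j k, V σ • ∑ r ∈ σ, f r) = Y at *
      have hii := hf i i
      have hi_j := hf i j
      have hi_k := hf i k
      have hjj := hf j j
      have hj_k := hf j k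
      have hkk := hf k k
      rw [min_self] at hii hjj hkk
      rw [min_eq_left (by omega)] at hi_j hi_k hj_k
      simp only [inner_add_left, inner_add_right, real_inner_smul_left, real_inner_smul_right,
        real_inner_comm X Y, real_inner_comm X (f _), real_inner_comm Y (f _)]
      rw [real_inner_comm (f i) (f j), real_inner_comm (f i) (f k), real_inner_comm (f j) (f k)]
      simp only [c1, c2, cross, l1, l2, l3, r1, r2, r3, hii, hi_j, hi_k, hjj, hj_k, hkk,
        hkR, hjR, hdR]
      ring
end comb
section geo
open scoped Pointwise

lemma gkz_triArea (m : ℕ) (v : Fin m → ℝ × ℝ) (i j k : Fin m) :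
    triArea v {i, j, k} =
      |((v j).1 - (v i).1) * ((v k).2 - (v i).2) - ((v k).1 - (v i).1) * ((v j).2 - (v i).2)|
      * (volume (convexHull ℝ ({(0, 0), (1, 0), (0, 1)} : Set (ℝ × ℝ)))).toReal := by
  set L : (ℝ × ℝ) →ₗ[ℝ] (ℝ × ℝ) :=
    Matrix.toLin (Module.Basis.finTwoProd ℝ) (Module.Basis.finTwoProd ℝ)
      !![(v j).1 - (v i).1, (v k).1 - (v i).1; (v j).2 - (v i).2, (v k).2 - (v i).2] with hL
  have himg : v '' (({i, j, k} : Finset (Fin m)) : Set (Fin m))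
      = (v i) +ᵥ (L '' ({(0, 0), (1, 0), (0, 1)} : Set (ℝ × ℝ))) := by
    simp only [Finset.coe_insert, Finset.coe_singleton, Set.image_insert_eq, Set.image_singleton,
      hL, Matrix.toLin_finTwoProd_apply, Set.vadd_set_insert, Set.vadd_set_singleton, vadd_eq_add]
    have e : ∀ x y : ℝ × ℝ, x + (y.1 - x.1, y.2 - x.2) = y := by
      intro x y; ext <;> simp
    have e0 : v i + ((0 : ℝ), (0 : ℝ)) = v i := by ext <;> simp
    simp [e, e0]
  unfold triArea
  rw [himg, convexHull_vadd, measure_vadd, ← LinearMap.image_convexHull,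
    Measure.addHaar_image_linearMap, hL, LinearMap.det_toLin, Matrix.det_fin_two_of,
    ENNReal.toReal_mul, ENNReal.toReal_ofReal (abs_nonneg _)]

/-- affine functions on the plane -/
def GkzAff (P : ℝ × ℝ → ℝ) : Prop :=
  ∀ x y : ℝ × ℝ, ∀ s t : ℝ, s + t = 1 → P (s • x + t • y) = s * P x + t * P y

lemma gkz_hull_pos {P : ℝ × ℝ → ℝ} (hP : GkzAff P) {S : Set (ℝ × ℝ)} (hS : ∀ x ∈ S, 0 < P x) :
    ∀ x ∈ convexHull ℝ S, 0 < P x := by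
  have hc : Convex ℝ {x | 0 < P x} := by
    intro x hx y hy s t hs ht hst
    simp only [Set.mem_ofPred_eq] at *
    rw [hP x y s t hst]
    rcases hs.eq_or_lt with h | h
    · have : t = 1 := by linarith
      subst this; rw [← h]; linarith
    · have := mul_pos h hx
      have := mul_nonneg ht hy.le
      linarith
  exact fun x hx => convexHull_min hS hc hx

lemma gkz_hull_nonneg {P : ℝ × ℝ → ℝ} (hP : GkzAff P) {S : Set (ℝ × ℝ)} (hS : ∀ x ∈ S, 0 ≤ P x) :
    ∀ x ∈ convexHull ℝ S, 0 ≤ P x := by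
  have hc : Convex ℝ {x | 0 ≤ P x} := by
    intro x hx y hy s t hs ht hst
    simp only [Set.mem_ofPred_eq] at *
    rw [hP x y s t hst]
    have := mul_nonneg hs hx
    have := mul_nonneg ht hy
    linarith
  exact fun x hx => convexHull_min hS hc hx

variable {N : ℕ} {v : Fin N → ℝ × ℝ}

/-- every quadratic polynomial in the index extends to an affine function -/
def GkzQuad (v : Fin N → ℝ × ℝ) : Prop :=
  ∀ e0 e1 e2 : ℝ, ∃ P : ℝ × ℝ → ℝ, GkzAff P ∧
    ∀ i : Fin N, P (v i) = e0 + e1 * (i : ℕ) + e2 * ((i : ℕ) : ℝ) ^ 2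

lemma gkz_mem_of_hull (hv : GkzQuad v) (σ : Finset (Fin N)) (i : Fin N)
    (h : v i ∈ convexHull ℝ (v '' ↑σ)) : i ∈ σ := by
  by_contra hi
  obtain ⟨P, hP, hPv⟩ := hv (((i : ℕ) : ℝ) ^ 2) (-2 * (i : ℕ)) 1
  have := gkz_hull_pos hP (S := v '' ↑σ) (by
    rintro _ ⟨r, hr, rfl⟩
    rw [hPv]
    have hne : ((r : ℕ) : ℝ) - (i : ℕ) ≠ 0 := by
      rw [sub_ne_zero]
      intro h
      have : r = i := Fin.ext (by exact_mod_cast h)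
      exact hi (this ▸ hr)
    have := pow_pos (abs_pos.mpr hne) 2
    rw [sq_abs] at this
    nlinarith) _ h
  rw [hPv] at this
  nlinarith

lemma gkz_hull_sub {σ : Finset (Fin N)} {i : Fin N} (h : i ∈ σ) :
    v i ∈ convexHull ℝ (v '' ↑σ) :=
  subset_convexHull ℝ _ ⟨i, h, rfl⟩

/-- a segment of one triangle whose relative interior meets another triangle -/
lemma gkz_edge (hv : GkzQuad v) {T : Finset (Finset (Fin N))} (hT : IsTriangulation v T)
    {σ τ : Finset (Fin N)} (hσ : σ ∈ T) (hτ : τ ∈ T) {a c : Fin N} (ha : a ∈ σ) (hc : c ∈ σ)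
    {z : ℝ × ℝ} (hz : z ∈ openSegment ℝ (v a) (v c)) (hzτ : z ∈ convexHull ℝ (v '' ↑τ)) :
    a ∈ τ ∧ c ∈ τ := by
  have hext := (hT.2.2 σ hσ τ hτ).1
  have hzσ : z ∈ convexHull ℝ (v '' ↑σ) :=
    (convex_convexHull ℝ _).openSegment_subset (gkz_hull_sub ha) (gkz_hull_sub hc) hz
  have h1 := hext.left_mem_of_mem_openSegment (gkz_hull_sub ha) (gkz_hull_sub hc) ⟨hzσ, hzτ⟩ hz
  have h2 := hext.left_mem_of_mem_openSegment (gkz_hull_sub hc) (gkz_hull_sub ha) ⟨hzσ, hzτ⟩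
    (by rw [openSegment_symm]; exact hz)
  exact ⟨gkz_mem_of_hull hv _ _ h1.2, gkz_mem_of_hull hv _ _ h2.2⟩

lemma gkz_noncross (hv : GkzQuad v) (p0 p1 p2 q0 q1 q2 : ℝ)
    (hvv : ∀ i : Fin N, v i = (p0 + p1 * (i : ℕ) + p2 * ((i : ℕ) : ℝ) ^ 2,
      q0 + q1 * (i : ℕ) + q2 * ((i : ℕ) : ℝ) ^ 2))
    {T : Finset (Finset (Fin N))} (hT : IsTriangulation v T) :
    ∀ σ ∈ T, ∀ τ ∈ T, ∀ a b c d : Fin N, a < b → b < c → c < d →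
      a ∈ σ → c ∈ σ → b ∈ τ → d ∈ τ → False := by
  intro σ hσ τ hτ a b c d hab hbc hcd ha hc hb hd
  have hab' : ((a : ℕ) : ℝ) < (b : ℕ) := by exact_mod_cast hab
  have hbc' : ((b : ℕ) : ℝ) < (c : ℕ) := by exact_mod_cast hbc
  have hcd' : ((c : ℕ) : ℝ) < (d : ℕ) := by exact_mod_cast hcd
  obtain ⟨z, hz1, hz2⟩ : ∃ z, z ∈ openSegment ℝ (v a) (v c) ∧ z ∈ openSegment ℝ (v b) (v d) := by
    rw [hvv a, hvv b, hvv c, hvv d]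
    generalize ((a : ℕ) : ℝ) = A at *
    generalize ((b : ℕ) : ℝ) = B at *
    generalize ((c : ℕ) : ℝ) = G at *
    generalize ((d : ℕ) : ℝ) = H at *
    have hS : 0 < B + H - A - G := by linarith
    have h1 : 0 < G - A := by linarith
    have h2 : 0 < H - B := by linarith
    refine ⟨((G - B) * (H - G) / ((B + H - A - G) * (G - A))) •
        (p0 + p1 * A + p2 * A ^ 2, q0 + q1 * A + q2 * A ^ 2) +
        ((B - A) * (H - A) / ((B + H - A - G) * (G - A))) •
        (p0 + p1 * G + p2 * G ^ 2, q0 + q1 * G + q2 * G ^ 2), ?_, ?_⟩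
    · refine ⟨_, _, ?_, ?_, ?_, rfl⟩
      · have : 0 < G - B := by linarith
        have : 0 < H - G := by linarith
        positivity
      · have : 0 < B - A := by linarith
        have : 0 < H - A := by linarith
        positivity
      · field_simp; ring
    · refine ⟨(H - A) * (H - G) / ((B + H - A - G) * (H - B)),
        (B - A) * (G - B) / ((B + H - A - G) * (H - B)), ?_, ?_, ?_, ?_⟩
      · have : 0 < H - A := by linarith
        have : 0 < H - G := by linarith
        positivity
      · have : 0 < B - A := by linarith
        have : 0 < G - B := by linarith
        positivity
      · field_simp; ring
      · ext
        · simp only [Prod.fst_add, Prod.smul_fst, smul_eq_mul]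
          field_simp; ring
        · simp only [Prod.snd_add, Prod.smul_snd, smul_eq_mul]
          field_simp; ring
  have hzτ : z ∈ convexHull ℝ (v '' ↑τ) :=
    (convex_convexHull ℝ _).openSegment_subset (gkz_hull_sub hb) (gkz_hull_sub hd) hz2
  obtain ⟨h1, h2⟩ := gkz_edge hv hT hσ hτ ha hc hz1 hzτ
  have hsub : ({a, b, c, d} : Finset (Fin N)) ⊆ τ := by
    intro r hr
    simp only [Finset.mem_insert, Finset.mem_singleton] at hr
    rcases hr with rfl | rfl | rfl | rfl <;> assumption
  have hcard := Finset.card_le_card hsub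
  rw [(hT.1 τ hτ).1] at hcard
  have h4 : ({a, b, c, d} : Finset (Fin N)).card = 4 := by
    have : ∀ x y : Fin N, x < y → x ≠ y := fun _ _ h => h.ne
    rw [Finset.card_insert_of_notMem, Finset.card_insert_of_notMem,
      Finset.card_insert_of_notMem, Finset.card_singleton]
    all_goals simp only [Finset.mem_insert, Finset.mem_singleton, Fin.ext_iff]; omega
  omega

lemma gkz_exists (hv : GkzQuad v)
    {T : Finset (Finset (Fin N))} (hT : IsTriangulation v T) (i k : Fin N)
    (hik : (i : ℕ) + 1 < (k : ℕ))
    (hB : (∃ σ ∈ T, i ∈ σ ∧ k ∈ σ) ∨ ((i : ℕ) = 0 ∧ (k : ℕ) + 1 = N)) :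
    ∃ j, i < j ∧ j < k ∧ {i, j, k} ∈ T := by
  classical
  set z : ℝ × ℝ := (1 / 2 : ℝ) • v i + (1 / 2 : ℝ) • v k with hz
  have hzseg : z ∈ openSegment ℝ (v i) (v k) :=
    ⟨1 / 2, 1 / 2, by norm_num, by norm_num, by norm_num, rfl⟩
  have hikR : ((i : ℕ) : ℝ) + 1 < (k : ℕ) := by exact_mod_cast hik
  -- any triangle through the midpoint has both end points as vertices
  have hmid : ∀ σ ∈ T, z ∈ convexHull ℝ (v '' ↑σ) → i ∈ σ ∧ k ∈ σ := by
    intro σ hσ hzσ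
    rcases hB with ⟨τ, hτ, hi, hk⟩ | ⟨hi0, hkN⟩
    · exact gkz_edge hv hT hτ hσ hi hk hzseg hzσ
    · have hbd : ∀ r : Fin N, ((i : ℕ) : ℝ) ≤ (r : ℕ) ∧ ((r : ℕ) : ℝ) ≤ (k : ℕ) := by
        intro r
        have := r.2
        constructor
        · exact_mod_cast (by omega : (i : ℕ) ≤ r)
        · exact_mod_cast (by omega : (r : ℕ) ≤ k)
      constructor
      · by_contra hc
        obtain ⟨P, hP, hPv⟩ := hv
          (-((i : ℕ) + (k : ℕ)) / 2 - ((k : ℕ) - (i : ℕ)) * ((i : ℕ) * (k : ℕ)))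
          (1 + ((k : ℕ) - (i : ℕ)) * ((i : ℕ) + (k : ℕ))) (-((k : ℕ) - (i : ℕ)))
        have := gkz_hull_pos hP (S := v '' ↑σ) (by
          rintro _ ⟨r, hr, rfl⟩
          have hri : (i : ℕ) + 1 ≤ r := by
            have : (r : ℕ) ≠ i := fun h => hc (Fin.ext h ▸ hr)
            omega
          have hri' : ((i : ℕ) : ℝ) + 1 ≤ (r : ℕ) := by exact_mod_cast hri
          rw [hPv]
          obtain ⟨u, hu⟩ : ∃ u : ℝ, ((r : ℕ) : ℝ) = (i : ℕ) + u := ⟨(r : ℕ) - (i : ℕ), by ring⟩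
          obtain ⟨w, hw⟩ : ∃ w : ℝ, ((k : ℕ) : ℝ) = (r : ℕ) + w := ⟨(k : ℕ) - (r : ℕ), by ring⟩
          have hu1 : 1 ≤ u := by linarith
          have hw0 : 0 ≤ w := by linarith [(hbd r).2]
          rw [hw, hu]
          have e1 : 0 ≤ (u * u - 1) * w := mul_nonneg (by nlinarith) hw0
          have e2 : 0 ≤ u * (w * w) := by positivity
          nlinarith) _ hzσ
        rw [hz, hP _ _ _ _ (by norm_num), hPv, hPv] at this
        nlinarith
      · by_contra hc
        obtain ⟨P, hP, hPv⟩ := hv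
          (((i : ℕ) + (k : ℕ)) / 2 - ((k : ℕ) - (i : ℕ)) * ((i : ℕ) * (k : ℕ)))
          (-1 + ((k : ℕ) - (i : ℕ)) * ((i : ℕ) + (k : ℕ))) (-((k : ℕ) - (i : ℕ)))
        have := gkz_hull_pos hP (S := v '' ↑σ) (by
          rintro _ ⟨r, hr, rfl⟩
          have hri : (r : ℕ) + 1 ≤ k := by
            have : (r : ℕ) ≠ k := fun h => hc (Fin.ext h ▸ hr)
            have := r.2
            omega
          have hri' : ((r : ℕ) : ℝ) + 1 ≤ (k : ℕ) := by exact_mod_cast hri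
          rw [hPv]
          obtain ⟨u, hu⟩ : ∃ u : ℝ, ((r : ℕ) : ℝ) = (i : ℕ) + u := ⟨(r : ℕ) - (i : ℕ), by ring⟩
          obtain ⟨w, hw⟩ : ∃ w : ℝ, ((k : ℕ) : ℝ) = (r : ℕ) + w := ⟨(k : ℕ) - (r : ℕ), by ring⟩
          have hu1 : 0 ≤ u := by linarith [(hbd r).1]
          have hw0 : 1 ≤ w := by linarith
          rw [hw, hu]
          have e1 : 0 ≤ (w * w - 1) * u := mul_nonneg (by nlinarith) hu1
          have e2 : 0 ≤ w * (u * u) := by positivity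
          nlinarith) _ hzσ
        rw [hz, hP _ _ _ _ (by norm_num), hPv, hPv] at this
        nlinarith
  -- a point just below the midpoint
  set j0 : Fin N := ⟨(i : ℕ) + 1, by have := k.2; omega⟩ with hj0
  let g : ℝ → ℝ × ℝ := fun ε => (1 - ε) • z + ε • v j0
  have hg : Continuous g := by fun_prop
  have hg0 : g 0 = z := by simp [g]
  set U : Set (ℝ × ℝ) := ⋃ σ ∈ T.filter (fun σ : Finset (Fin N) => z ∉ convexHull ℝ (v '' (σ : Set (Fin N)))),
    convexHull ℝ (v '' (σ : Set (Fin N))) with hU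
  have hUc : IsClosed U := by
    apply Set.Finite.isClosed_biUnion (Finset.finite_toSet _)
    intro σ _
    exact ((Set.toFinite (v '' (σ : Set (Fin N)))).isCompact_convexHull ℝ).isClosed
  have hzU : z ∉ U := by
    simp only [hU, Set.mem_iUnion, Finset.mem_filter, not_exists]
    rintro σ ⟨_, h⟩ h'
    exact h h'
  have hev : ∀ᶠ ε in nhdsWithin (0 : ℝ) (Set.Ioi 0), g ε ∉ U := by
    have h1 : ∀ᶠ ε in nhds (0 : ℝ), g ε ∈ Uᶜ :=
      hg.continuousAt.eventually_mem (hUc.isOpen_compl.mem_nhds (by rw [hg0]; exact hzU))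
    exact h1.filter_mono nhdsWithin_le_nhds
  have hev2 : ∀ᶠ ε in nhdsWithin (0 : ℝ) (Set.Ioi 0), ε ∈ Set.Ioo (0 : ℝ) 1 :=
    Ioo_mem_nhdsGT (by norm_num)
  obtain ⟨ε, hε1, hε0, hε2⟩ := (hev.and hev2).exists
  have hrange : ∀ r, v r ∈ convexHull ℝ (Set.range v) := fun r =>
    subset_convexHull ℝ _ ⟨r, rfl⟩
  have hgh : g ε ∈ convexHull ℝ (Set.range v) := by
    have hc := convex_convexHull ℝ (Set.range v)
    exact hc (hc (hrange i) (hrange k) (by norm_num) (by norm_num) (by norm_num)) (hrange j0)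
      (by linarith) hε0.le (by ring)
  rw [← hT.2.1] at hgh
  simp only [Set.mem_iUnion] at hgh
  obtain ⟨σ, hσ, hgσ⟩ := hgh
  have hzσ : z ∈ convexHull ℝ (v '' (σ : Set (Fin N))) := by
    by_contra hc
    apply hε1
    simp only [hU, Set.mem_iUnion, Finset.mem_filter]
    exact ⟨σ, ⟨hσ, hc⟩, hgσ⟩
  obtain ⟨hiσ, hkσ⟩ := hmid σ hσ hzσ
  obtain ⟨P, hP, hPv⟩ := hv ((i : ℕ) * (k : ℕ)) (-((i : ℕ) + (k : ℕ))) 1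
  have hneg : P (g ε) < 0 := by
    have hj0R : ((j0 : ℕ) : ℝ) = (i : ℕ) + 1 := by simp [hj0]
    have : P (g ε) = ε * (-((k : ℕ) - ((i : ℕ) + 1))) := by
      simp only [g]
      rw [hP _ _ _ _ (by ring), hz, hP _ _ _ _ (by norm_num), hPv, hPv, hPv, hj0R]
      ring
    rw [this]
    apply mul_neg_of_pos_of_neg hε0
    linarith
  obtain ⟨j, hjσ, hj⟩ : ∃ j ∈ σ, P (v j) < 0 := by
    by_contra hc
    push Not at hc
    have := gkz_hull_nonneg hP (S := v '' ↑σ) (by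
      rintro _ ⟨r, hr, rfl⟩
      exact hc r hr) _ hgσ
    linarith
  rw [hPv] at hj
  have hj' : (((j : ℕ) : ℝ) - (i : ℕ)) * ((j : ℕ) - (k : ℕ)) < 0 := by nlinarith
  have hlt : ((i : ℕ) : ℝ) < (j : ℕ) ∧ ((j : ℕ) : ℝ) < (k : ℕ) := by
    rcases mul_neg_iff.mp hj' with ⟨h1, h2⟩ | ⟨h1, h2⟩
    · exact ⟨by linarith, by linarith⟩
    · exfalso; linarith
  have hij : i < j := by exact_mod_cast hlt.1
  have hjk : j < k := by exact_mod_cast hlt.2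
  refine ⟨j, hij, hjk, ?_⟩
  have hsub : ({i, j, k} : Finset (Fin N)) ⊆ σ := by
    intro r hr
    simp only [Finset.mem_insert, Finset.mem_singleton] at hr
    rcases hr with rfl | rfl | rfl <;> assumption
  have hcard : ({i, j, k} : Finset (Fin N)).card = 3 := by
    rw [Finset.card_eq_three]
    exact ⟨i, j, k, hij.ne, (hij.trans hjk).ne, hjk.ne, rfl⟩
  rw [Finset.eq_of_subset_of_card_le hsub (by rw [(hT.1 σ hσ).1, hcard])]
  exact hσ

end geo
lemma gkz_coeffs (p q : Polynomial ℝ)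
    (hp : p.degree ≤ 2) (hq : q.degree ≤ 2)
    (hind : LinearIndependent ℝ ![p, q, (1 : Polynomial ℝ)])
    (a b : ℝ) (hb : b ≠ 0) :
    ∃ p0 p1 p2 q0 q1 q2 : ℝ, p1 * q2 - p2 * q1 ≠ 0 ∧
      (∀ t : ℝ, p.eval (a + t * b) = p0 + p1 * t + p2 * t ^ 2) ∧
      (∀ t : ℝ, q.eval (a + t * b) = q0 + q1 * t + q2 * t ^ 2) := by
  have hform : ∀ r : Polynomial ℝ, r.degree ≤ 2 →
      r = Polynomial.C (r.coeff 2) * Polynomial.X ^ 2 + Polynomial.C (r.coeff 1) * Polynomial.X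
        + Polynomial.C (r.coeff 0) := fun r hr => Polynomial.eq_quadratic_of_degree_le_two hr
  have hpf := hform p hp
  have hqf := hform q hq
  generalize p.coeff 2 = c2 at hpf
  generalize p.coeff 1 = c1 at hpf
  generalize p.coeff 0 = c0 at hpf
  generalize q.coeff 2 = e2 at hqf
  generalize q.coeff 1 = e1 at hqf
  generalize q.coeff 0 = e0 at hqf
  have hli : ∀ s t u : ℝ, Polynomial.C s * p + Polynomial.C t * q + Polynomial.C u = 0 →
      s = 0 ∧ t = 0 ∧ u = 0 := by
    intro s t u h
    rw [Fintype.linearIndependent_iff] at hind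
    have := hind ![s, t, u] (by
      simp only [Fin.sum_univ_three, Polynomial.smul_eq_C_mul]
      simpa using h)
    exact ⟨this 0, this 1, this 2⟩
  have hD : c1 * e2 - c2 * e1 ≠ 0 := by
    intro h
    have hC : (Polynomial.C c1 * Polynomial.C e2 - Polynomial.C c2 * Polynomial.C e1
        : Polynomial ℝ) = 0 := by
      rw [← Polynomial.C_mul, ← Polynomial.C_mul, ← Polynomial.C_sub, h, Polynomial.C_0]
    obtain ⟨h1, h2, -⟩ := hli e2 (-c2) (-(e2 * c0 - c2 * e0)) (by
      rw [hpf, hqf]; simp only [Polynomial.C_neg, Polynomial.C_sub, Polynomial.C_mul]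
      linear_combination Polynomial.X * hC)
    obtain ⟨h3, h4, -⟩ := hli e1 (-c1) (-(e1 * c0 - c1 * e0)) (by
      rw [hpf, hqf]; simp only [Polynomial.C_neg, Polynomial.C_sub, Polynomial.C_mul]
      linear_combination -Polynomial.X ^ 2 * hC)
    have h2' : c2 = 0 := by linarith
    have h4' : c1 = 0 := by linarith
    obtain ⟨h5, -, -⟩ := hli 1 0 (-c0) (by
      rw [hpf, h2', h4']; simp)
    exact one_ne_zero h5
  refine ⟨c0 + c1 * a + c2 * a ^ 2, b * (c1 + 2 * c2 * a), c2 * b ^ 2,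
    e0 + e1 * a + e2 * a ^ 2, b * (e1 + 2 * e2 * a), e2 * b ^ 2, ?_, ?_, ?_⟩
  · have : b * (c1 + 2 * c2 * a) * (e2 * b ^ 2) - c2 * b ^ 2 * (b * (e1 + 2 * e2 * a))
        = b ^ 3 * (c1 * e2 - c2 * e1) := by ring
    rw [this]
    exact mul_ne_zero (pow_ne_zero _ hb) hD
  · intro t; rw [hpf]; simp; ring
  · intro t; rw [hqf]; simp; ring

lemma gkz_inner_f {N : ℕ} (f : Fin N → EuclideanSpace ℝ (Fin N))
    (hf : ∀ i, f i = ∑ j ∈ Finset.Iic i, EuclideanSpace.single j (1 : ℝ)) (i j : Fin N) :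
    inner ℝ (f i) (f j) = ((min (i : ℕ) (j : ℕ) : ℕ) : ℝ) + 1 := by
  have hc : ∀ i r, f i r = if r ≤ i then 1 else 0 := by
    intro i r
    rw [hf]
    simp [Finset.sum_apply, Pi.single_apply]
  have h : inner ℝ (f i) (f j) = ∑ r : Fin N, if r ≤ min i j then (1 : ℝ) else 0 := by
    rw [PiLp.inner_apply]
    refine Finset.sum_congr rfl ?_
    intro r _
    rw [hc, hc]
    by_cases h1 : r ≤ i <;> by_cases h2 : r ≤ j <;> simp [h1, h2]
  rw [h, Finset.sum_boole]
  have : (Finset.univ.filter (fun r : Fin N => r ≤ min i j)) = Finset.Iic (min i j) := by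
    ext r; simp
  rw [this, Fin.card_Iic]
  push_cast
  simp

lemma gkz_eq {N : ℕ} {E : Type*} [AddCommGroup E] [Module ℝ E]
    (v : Fin N → ℝ × ℝ) (f : Fin N → E) (T : Finset (Finset (Fin N))) :
    GKZ v f T = ∑ σ ∈ T, triArea v σ • ∑ r ∈ σ, f r := by
  unfold GKZ
  simp only [Finset.sum_smul, Finset.smul_sum, Finset.sum_filter]
  rw [Finset.sum_comm]
  refine Finset.sum_congr rfl ?_
  intro σ _
  simp only [ite_smul, zero_smul]
  rw [← Finset.sum_filter]
  refine Finset.sum_congr ?_ (fun _ _ => rfl)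
  ext r; simp

/-- All GKZ vectors of triangulations of `n+3` equally spaced points on a
(nondegenerate) quadratic plane curve, with respect to the partial sums of the
standard basis vectors, have the same Euclidean norm. -/
theorem gkz_norm_eq_of_quadratic_curve (n : ℕ) (p q : Polynomial ℝ)
    (hp : p.degree ≤ 2) (hq : q.degree ≤ 2)
    (hind : LinearIndependent ℝ ![p, q, (1 : Polynomial ℝ)])
    (a b : ℝ) (hb : b ≠ 0)
    (v : Fin (n + 3) → ℝ × ℝ)
    (hv : ∀ i : Fin (n + 3),
      v i = (p.eval (a + (i : ℕ) * b), q.eval (a + (i : ℕ) * b)))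
    (f : Fin (n + 3) → EuclideanSpace ℝ (Fin (n + 3)))
    (hf : ∀ i, f i = ∑ j ∈ Finset.Iic i, EuclideanSpace.single j (1 : ℝ))
    (T T' : Finset (Finset (Fin (n + 3))))
    (hT : IsTriangulation v T) (hT' : IsTriangulation v T') :
    ‖GKZ v f T‖ = ‖GKZ v f T'‖ := by
  obtain ⟨p0, p1, p2, q0, q1, q2, hD, hpe, hqe⟩ := gkz_coeffs p q hp hq hind a b hb
  have hvv : ∀ i : Fin (n + 3), v i = (p0 + p1 * (i : ℕ) + p2 * ((i : ℕ) : ℝ) ^ 2,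
      q0 + q1 * (i : ℕ) + q2 * ((i : ℕ) : ℝ) ^ 2) := by
    intro i; rw [hv, hpe, hqe]
  have hquad : GkzQuad v := by
    intro e0 e1 e2
    refine ⟨fun z => e0 + e1 * (((z.1 - p0) * q2 - (z.2 - q0) * p2) / (p1 * q2 - p2 * q1))
      + e2 * ((p1 * (z.2 - q0) - q1 * (z.1 - p0)) / (p1 * q2 - p2 * q1)), ?_, ?_⟩
    · intro x y s t hst
      obtain rfl : t = 1 - s := by linarith
      simp only [Prod.fst_add, Prod.snd_add, Prod.smul_fst, Prod.smul_snd, smul_eq_mul]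
      field_simp
      ring
    · intro i
      rw [hvv]
      field_simp
      ring
  have hinner := gkz_inner_f f hf
  have key : ∀ S : Finset (Finset (Fin (n + 3))), IsTriangulation v S →
      inner ℝ (GKZ v f S) (GKZ v f S) =
        (|p1 * q2 - p2 * q1| *
          (volume (convexHull ℝ ({(0, 0), (1, 0), (0, 1)} : Set (ℝ × ℝ)))).toReal) ^ 2 *
        ((((0 : Fin (n + 3)) : ℕ) + 1) * (((n + 1 : ℕ) + 1 : ℝ) ^ 3 - ((n + 1 : ℕ) + 1 : ℝ)) ^ 2
          + (2 * ((n + 1 : ℕ) + 1 : ℝ) ^ 7 / 7 - 3 * ((n + 1 : ℕ) + 1 : ℝ) ^ 5 / 5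
            + ((n + 1 : ℕ) + 1 : ℝ) ^ 3 / 3 - 2 * ((n + 1 : ℕ) + 1 : ℝ) / 105)) := by
    intro S hS
    have h := gkz_comb f hinner S (triArea v)
      (|p1 * q2 - p2 * q1| *
          (volume (convexHull ℝ ({(0, 0), (1, 0), (0, 1)} : Set (ℝ × ℝ)))).toReal)
      (by
        intro i j k hij hjk
        have h1 : (0 : ℝ) < (j : ℕ) - (i : ℕ) := by
          rw [sub_pos]; exact_mod_cast hij
        have h2 : (0 : ℝ) < (k : ℕ) - (j : ℕ) := by
          rw [sub_pos]; exact_mod_cast hjk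
        have h3 : (0 : ℝ) < (k : ℕ) - (i : ℕ) := by linarith
        have hdet : ((v j).1 - (v i).1) * ((v k).2 - (v i).2)
            - ((v k).1 - (v i).1) * ((v j).2 - (v i).2)
            = (p1 * q2 - p2 * q1) * ((((j : ℕ) : ℝ) - (i : ℕ)) * (((k : ℕ) : ℝ) - (i : ℕ))
              * (((k : ℕ) : ℝ) - (j : ℕ))) := by
          rw [hvv i, hvv j, hvv k]; ring
        rw [gkz_triArea, hdet, abs_mul, abs_of_pos (mul_pos (mul_pos h1 h3) h2)]
        ring)
      (fun σ hσ => (hS.1 σ hσ).1)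
      (gkz_noncross hquad p0 p1 p2 q0 q1 q2 hvv hS)
      (fun i k => (i : ℕ) = 0 ∧ (k : ℕ) + 1 = n + 3)
      (fun i k hik hB => gkz_exists hquad hS i k hik hB)
      (n + 1) 0 (Fin.last (n + 2)) _ (by simp) rfl (Or.inr ⟨rfl, rfl⟩)
    have hall : gkzSub S 0 (Fin.last (n + 2)) = S := by
      unfold gkzSub
      rw [Finset.filter_true_of_mem]
      intro σ _ r _
      exact ⟨Fin.zero_le r, Fin.le_last r⟩
    rw [hall] at h
    rw [gkz_eq]
    exact h.2.2
  rw [norm_eq_sqrt_real_inner, norm_eq_sqrt_real_inner, key T hT, key T' hT']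
end

section
/- Let n ≥ 0 and let v_i := (i, i²) ∈ ℝ² for i = 0, 1, …, n+2 be points on the standard parabola at consecutive integer parameters. Let f_i := e_0 + e_1 + ⋯ + e_i ∈ ℝ^{n+3} (partial sums of the standard basis vectors). Then for any two triangulations T and T′ of the point configuration {v_0, …, v_{n+2}}, the GKZ vectors have equal Euclidean norm: ‖GKZ(T)‖ = ‖GKZ(T′)‖. -/
open MeasureTheory

namespace Parab

/-- The bilinear form `∑ φ i ψ k |i - k|`. -/
noncomputable def B {N : ℕ} (φ ψ : Fin N → ℝ) : ℝ :=
  ∑ i, ∑ k, φ i * ψ k * |((i : ℕ) : ℝ) - ((k : ℕ) : ℝ)|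

noncomputable def m0 {N : ℕ} (φ : Fin N → ℝ) : ℝ := ∑ i, φ i

noncomputable def m1 {N : ℕ} (φ : Fin N → ℝ) : ℝ := ∑ i, φ i * ((i : ℕ) : ℝ)

lemma B_add_left {N : ℕ} (φ φ' ψ : Fin N → ℝ) : B (φ + φ') ψ = B φ ψ + B φ' ψ := by
  simp only [B, Pi.add_apply, add_mul, Finset.sum_add_distrib]

lemma B_add_right {N : ℕ} (φ ψ ψ' : Fin N → ℝ) : B φ (ψ + ψ') = B φ ψ + B φ ψ' := by
  simp only [B, Pi.add_apply, mul_add, add_mul, Finset.sum_add_distrib]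

lemma m0_add {N : ℕ} (φ φ' : Fin N → ℝ) : m0 (φ + φ') = m0 φ + m0 φ' := by
  simp only [m0, Pi.add_apply, Finset.sum_add_distrib]

lemma m1_add {N : ℕ} (φ φ' : Fin N → ℝ) : m1 (φ + φ') = m1 φ + m1 φ' := by
  simp only [m1, Pi.add_apply, add_mul, Finset.sum_add_distrib]

lemma m0_single {N : ℕ} (a : Fin N) (V : ℝ) : m0 (Pi.single a V) = V := by
  simp [m0]

lemma m1_single {N : ℕ} (a : Fin N) (V : ℝ) :
    m1 (Pi.single a V) = V * ((a : ℕ) : ℝ) := by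
  simp [m1, Pi.single_apply]

/-- `φ` is supported in `[a, c]`. -/
def Supp {N : ℕ} (a c : Fin N) (φ : Fin N → ℝ) : Prop := ∀ i, φ i ≠ 0 → a ≤ i ∧ i ≤ c

lemma supp_single {N : ℕ} (a : Fin N) (V : ℝ) : Supp a a (Pi.single a V) := by
  intro i hi
  by_cases h : i = a
  · subst h; exact ⟨le_rfl, le_rfl⟩
  · simp [h] at hi

lemma B_sep {N : ℕ} {a b b' c : Fin N} {φ ψ : Fin N → ℝ} (h1 : Supp a b φ) (h2 : Supp b' c ψ)
    (hb : b ≤ b') : B φ ψ = m0 φ * m1 ψ - m1 φ * m0 ψ := by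
  simp only [B, m0, m1, Finset.sum_mul_sum, ← Finset.sum_sub_distrib]
  refine Finset.sum_congr rfl fun i _ => Finset.sum_congr rfl fun k _ => ?_
  by_cases hi : φ i = 0
  · simp [hi]
  by_cases hk : ψ k = 0
  · simp [hk]
  have hik : i ≤ k := (h1 i hi).2.trans (hb.trans (h2 k hk).1)
  have : ((i : ℕ) : ℝ) ≤ ((k : ℕ) : ℝ) := by exact_mod_cast hik
  rw [abs_of_nonpos (by linarith)]
  ring

lemma B_comm {N : ℕ} (φ ψ : Fin N → ℝ) : B φ ψ = B ψ φ := by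
  simp only [B]
  rw [Finset.sum_comm]
  refine Finset.sum_congr rfl fun i _ => Finset.sum_congr rfl fun k _ => ?_
  rw [abs_sub_comm]; ring

/-- Moment data of the GKZ weights of a triangulated subpolygon on `[a, c]`. -/
structure Mom {N : ℕ} (s : ℝ) (a c : Fin N) (φ : Fin N → ℝ) : Prop where
  supp : Supp a c φ
  h0 : ∀ L : ℝ, L = ((c : ℕ) : ℝ) - ((a : ℕ) : ℝ) → m0 φ = s * ((L ^ 3 - L) / 2)
  h1 : ∀ L : ℝ, L = ((c : ℕ) : ℝ) - ((a : ℕ) : ℝ) →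
    m1 φ = s * ((L ^ 3 - L) / 2) * ((((a : ℕ) : ℝ) + ((c : ℕ) : ℝ)) / 2)
  hq : ∀ L : ℝ, L = ((c : ℕ) : ℝ) - ((a : ℕ) : ℝ) →
    B φ φ = s ^ 2 * (3 / 28 * L ^ 7 - 1 / 5 * L ^ 5 + 1 / 12 * L ^ 3 + 1 / 105 * L)

lemma Mom.base {N : ℕ} (s : ℝ) (a c : Fin N) (h : (c : ℕ) = a + 1) : Mom s a c 0 := by
  constructor
  · intro i hi; simp at hi
  all_goals
    intro L hL
    have : L = 1 := by rw [hL, h]; push_cast; ring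
    subst this
    simp [m0, m1, B]
    try norm_num

lemma Mom.step {N : ℕ} {s : ℝ} {a b c : Fin N} (hab : a ≤ b) (hbc : b ≤ c)
    {φ ψ : Fin N → ℝ} (h1 : Mom s a b φ) (h2 : Mom s b c ψ) (V : ℝ)
    (hV : V = s * ((((b : ℕ) : ℝ) - ((a : ℕ) : ℝ)) * (((c : ℕ) : ℝ) - ((b : ℕ) : ℝ)) *
      (((c : ℕ) : ℝ) - ((a : ℕ) : ℝ)) / 2)) :
    Mom s a c (φ + ψ + (Pi.single a V + Pi.single b V + Pi.single c V)) := by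
  have sa := supp_single a V
  have sb := supp_single b V
  have sc := supp_single c V
  have e1 := h1.h0 _ rfl
  have e2 := h1.h1 _ rfl
  have e3 := h1.hq _ rfl
  have f1 := h2.h0 _ rfl
  have f2 := h2.h1 _ rfl
  have f3 := h2.hq _ rfl
  constructor
  · intro i hi
    by_contra hcon
    apply hi
    have g1 : φ i = 0 := by
      by_contra h
      exact hcon ⟨(h1.supp i h).1, (h1.supp i h).2.trans hbc⟩
    have g2 : ψ i = 0 := by
      by_contra h
      exact hcon ⟨hab.trans (h2.supp i h).1, (h2.supp i h).2⟩
    have n1 : i ≠ a := by rintro rfl; exact hcon ⟨le_rfl, hab.trans hbc⟩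
    have n2 : i ≠ b := by rintro rfl; exact hcon ⟨hab, hbc⟩
    have n3 : i ≠ c := by rintro rfl; exact hcon ⟨hab.trans hbc, le_rfl⟩
    simp [g1, g2, n1, n2, n3]
  · intro L hL
    simp only [m0_add, m0_single, e1, f1]
    subst hL hV; ring
  · intro L hL
    simp only [m1_add, m1_single, e2, f2]
    subst hL hV; ring
  · intro L hL
    simp only [B_add_left, B_add_right]
    rw [B_comm ψ φ, B_comm (Pi.single a V) φ, B_comm (Pi.single b V) φ, B_comm (Pi.single c V) φ,
      B_comm (Pi.single a V) ψ, B_comm (Pi.single b V) ψ, B_comm (Pi.single c V) ψ,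
      B_comm (Pi.single b V) (Pi.single a V), B_comm (Pi.single c V) (Pi.single a V),
      B_comm (Pi.single c V) (Pi.single b V), B_sep h1.supp h2.supp le_rfl,
      B_comm φ (Pi.single a V), B_sep sa h1.supp le_rfl, B_sep h1.supp sb le_rfl,
      B_sep h1.supp sc hbc, B_comm ψ (Pi.single a V), B_comm ψ (Pi.single b V),
      B_sep sa h2.supp hab, B_sep sb h2.supp le_rfl, B_sep h2.supp sc le_rfl,
      B_sep sa sa le_rfl, B_sep sb sb le_rfl, B_sep sc sc le_rfl, B_sep sa sb hab,
      B_sep sa sc (hab.trans hbc), B_sep sb sc hbc, e3, f3]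
    simp only [m0_single, m1_single, e1, e2, f1, f2]
    subst hL hV; ring

end Parab

namespace Parab

/-- The reference area. -/
noncomputable def kap : ℝ :=
  (volume (convexHull ℝ ({((0 : ℝ), (0 : ℝ)), ((1 : ℝ), (0 : ℝ)), ((0 : ℝ), (1 : ℝ))} : Set (ℝ × ℝ)))).toReal

lemma area_hull (p q r : ℝ × ℝ) :
    (volume (convexHull ℝ ({p, q, r} : Set (ℝ × ℝ)))).toReal =
      |(q.1 - p.1) * (r.2 - p.2) - (r.1 - p.1) * (q.2 - p.2)| * kap := by
  set M : Matrix (Fin 2) (Fin 2) ℝ := !![q.1 - p.1, r.1 - p.1; q.2 - p.2, r.2 - p.2] with hM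
  set A : (ℝ × ℝ) →ₗ[ℝ] (ℝ × ℝ) :=
    Matrix.toLin (Module.Basis.finTwoProd ℝ) (Module.Basis.finTwoProd ℝ) M with hA
  have hdet : LinearMap.det A = (q.1 - p.1) * (r.2 - p.2) - (r.1 - p.1) * (q.2 - p.2) := by
    rw [hA, LinearMap.det_toLin, hM, Matrix.det_fin_two_of]
  have hAx : ∀ x : ℝ × ℝ, A x = ((q.1 - p.1) * x.1 + (r.1 - p.1) * x.2,
      (q.2 - p.2) * x.1 + (r.2 - p.2) * x.2) := by
    intro x
    rw [hA, hM, Matrix.toLin_finTwoProd_apply]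
  have himg : ({p, q, r} : Set (ℝ × ℝ)) = (fun x => p + x) ''
      (A '' ({((0 : ℝ), (0 : ℝ)), ((1 : ℝ), (0 : ℝ)), ((0 : ℝ), (1 : ℝ))} : Set (ℝ × ℝ))) := by
    simp only [Set.image_insert_eq, Set.image_singleton, hAx]
    have h1 : p + ((q.1 - p.1) * 0 + (r.1 - p.1) * 0, (q.2 - p.2) * 0 + (r.2 - p.2) * 0) = p := by
      ext <;> simp
    have h2 : p + ((q.1 - p.1) * 1 + (r.1 - p.1) * 0, (q.2 - p.2) * 1 + (r.2 - p.2) * 0) = q := by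
      ext <;> simp
    have h3 : p + ((q.1 - p.1) * 0 + (r.1 - p.1) * 1, (q.2 - p.2) * 0 + (r.2 - p.2) * 1) = r := by
      ext <;> simp
    rw [h1, h2, h3]
  have hh : convexHull ℝ ({p, q, r} : Set (ℝ × ℝ)) = (fun x => p + x) ''
      (A '' convexHull ℝ ({((0 : ℝ), (0 : ℝ)), ((1 : ℝ), (0 : ℝ)), ((0 : ℝ), (1 : ℝ))} : Set (ℝ × ℝ))) := by
    rw [himg, A.image_convexHull]
    have := (AffineEquiv.constVAdd ℝ (ℝ × ℝ) p).toAffineMap.image_convexHull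
      (A '' ({((0 : ℝ), (0 : ℝ)), ((1 : ℝ), (0 : ℝ)), ((0 : ℝ), (1 : ℝ))} : Set (ℝ × ℝ)))
    exact this.symm
  rw [hh, Set.image_add_left, measure_preimage_add, Measure.addHaar_image_linearMap, hdet,
    ENNReal.toReal_mul, ENNReal.toReal_ofReal (abs_nonneg _), kap]

variable {N : ℕ}

/-- Parabola points. -/
def IsPar (v : Fin N → ℝ × ℝ) : Prop :=
  ∀ i : Fin N, v i = (((i : ℕ) : ℝ), ((i : ℕ) : ℝ) ^ 2)

lemma cast_lt' {a b : Fin N} (h : a < b) : ((a : ℕ) : ℝ) < ((b : ℕ) : ℝ) := by exact_mod_cast h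

lemma cast_le' {a b : Fin N} (h : a ≤ b) : ((a : ℕ) : ℝ) ≤ ((b : ℕ) : ℝ) := by exact_mod_cast h

lemma triArea_eq {v : Fin N → ℝ × ℝ} (hv : IsPar v) {a b c : Fin N} (hab : a < b) (hbc : b < c) :
    triArea v {a, b, c} = 2 * kap * ((((b : ℕ) : ℝ) - ((a : ℕ) : ℝ)) *
      (((c : ℕ) : ℝ) - ((b : ℕ) : ℝ)) * (((c : ℕ) : ℝ) - ((a : ℕ) : ℝ)) / 2) := by
  have e : v '' (({a, b, c} : Finset (Fin N)) : Set (Fin N)) = {v a, v b, v c} := by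
    simp [Set.image_insert_eq]
  rw [triArea, e, area_hull, hv a, hv b, hv c]
  have h1 := cast_lt' hab
  have h2 := cast_lt' hbc
  have : (((b : ℕ) : ℝ) - ((a : ℕ) : ℝ)) * (((c : ℕ) : ℝ) ^ 2 - ((a : ℕ) : ℝ) ^ 2)
    - (((c : ℕ) : ℝ) - ((a : ℕ) : ℝ)) * (((b : ℕ) : ℝ) ^ 2 - ((a : ℕ) : ℝ) ^ 2) =
     (((b : ℕ) : ℝ) - ((a : ℕ) : ℝ)) *
      (((c : ℕ) : ℝ) - ((b : ℕ) : ℝ)) * (((c : ℕ) : ℝ) - ((a : ℕ) : ℝ)) := by ring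
  simp only [this]
  rw [abs_of_nonneg]
  · ring
  · have := sub_pos.2 h1
    have := sub_pos.2 h2
    have := sub_pos.2 (h1.trans h2)
    positivity

/-- The affine functional whose value at `(t, t²)` is `(t - p)(t - q)`. -/
def ell (p q : ℝ) (z : ℝ × ℝ) : ℝ := z.2 - (p + q) * z.1 + p * q

lemma ell_comb (p q : ℝ) (y z : ℝ × ℝ) (s t : ℝ) (h : s + t = 1) :
    ell p q (s • y + t • z) = s * ell p q y + t * ell p q z := by
  simp only [ell, Prod.snd_add, Prod.fst_add, Prod.smul_fst, Prod.smul_snd, smul_eq_mul]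
  have : t = 1 - s := by linarith
  subst this; ring

lemma ell_v {v : Fin N → ℝ × ℝ} (hv : IsPar v) (p q : ℝ) (i : Fin N) :
    ell p q (v i) = (((i : ℕ) : ℝ) - p) * (((i : ℕ) : ℝ) - q) := by
  rw [hv i, ell]; ring

lemma ell_le {v : Fin N → ℝ × ℝ} {p q : ℝ} {τ : Set (Fin N)} (h : ∀ i ∈ τ, ell p q (v i) ≤ 0)
    {z : ℝ × ℝ} (hz : z ∈ convexHull ℝ (v '' τ)) : ell p q z ≤ 0 := by
  have hc : Convex ℝ {z : ℝ × ℝ | ell p q z ≤ 0} := by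
    intro y hy z hz s t hs ht hst
    simp only [Set.mem_ofPred_eq] at *
    rw [ell_comb _ _ _ _ _ _ hst]
    nlinarith
  exact convexHull_min (by rintro _ ⟨i, hi, rfl⟩; exact h i hi) hc hz

lemma ell_ge {v : Fin N → ℝ × ℝ} {p q : ℝ} {τ : Set (Fin N)} (h : ∀ i ∈ τ, 0 ≤ ell p q (v i))
    {z : ℝ × ℝ} (hz : z ∈ convexHull ℝ (v '' τ)) : 0 ≤ ell p q z := by
  have hc : Convex ℝ {z : ℝ × ℝ | 0 ≤ ell p q z} := by
    intro y hy z hz s t hs ht hst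
    simp only [Set.mem_ofPred_eq] at *
    rw [ell_comb _ _ _ _ _ _ hst]
    positivity
  exact convexHull_min (by rintro _ ⟨i, hi, rfl⟩; exact h i hi) hc hz

lemma ell_gt {v : Fin N → ℝ × ℝ} {p q : ℝ} {τ : Set (Fin N)} (h : ∀ i ∈ τ, 0 < ell p q (v i))
    {z : ℝ × ℝ} (hz : z ∈ convexHull ℝ (v '' τ)) : 0 < ell p q z := by
  have hc : Convex ℝ {z : ℝ × ℝ | 0 < ell p q z} := by
    intro y hy z hz s t hs ht hst
    simp only [Set.mem_ofPred_eq] at *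
    rw [ell_comb _ _ _ _ _ _ hst]
    rcases hs.eq_or_lt with h0 | h0
    · have : t = 1 := by linarith
      subst this; subst h0; simpa using hz
    · have := mul_nonneg ht hz.le
      have := mul_pos h0 hy
      linarith
  exact convexHull_min (by rintro _ ⟨i, hi, rfl⟩; exact h i hi) hc hz

lemma vertex_mem {v : Fin N → ℝ × ℝ} (hv : IsPar v) {τ : Finset (Fin N)} {a : Fin N}
    (h : v a ∈ convexHull ℝ (v '' (τ : Set (Fin N)))) : a ∈ τ := by
  by_contra ha
  have := ell_gt (p := ((a : ℕ) : ℝ)) (q := ((a : ℕ) : ℝ)) (fun i hi => ?_) h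
  · rw [ell_v hv] at this; simp at this
  · rw [ell_v hv]
    have : ((i : ℕ) : ℝ) ≠ ((a : ℕ) : ℝ) := by
      intro h
      apply ha
      have : i = a := Fin.ext (by exact_mod_cast h)
      rw [← this]; exact hi
    exact mul_self_pos.2 (sub_ne_zero.2 this)

lemma vmem {v : Fin N → ℝ × ℝ} {τ : Finset (Fin N)} {a : Fin N} (h : a ∈ τ) :
    v a ∈ convexHull ℝ (v '' (τ : Set (Fin N))) :=
  subset_convexHull ℝ _ ⟨a, h, rfl⟩

/-- if an interior point of an edge of `σ` lies in `τ`, the edge is in `τ` -/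
lemma edge_mem {v : Fin N → ℝ × ℝ} (hv : IsPar v) {T : Finset (Finset (Fin N))}
    (hT : IsTriangulation v T) {σ τ : Finset (Fin N)} (hσ : σ ∈ T) (hτ : τ ∈ T)
    {a c : Fin N} (ha : a ∈ σ) (hc : c ∈ σ) {z : ℝ × ℝ} (hz : z ∈ openSegment ℝ (v a) (v c))
    (hzτ : z ∈ convexHull ℝ (v '' (τ : Set (Fin N)))) : a ∈ τ ∧ c ∈ τ := by
  have hE := (hT.2.2 σ hσ τ hτ).1
  have hzσ : z ∈ convexHull ℝ (v '' (σ : Set (Fin N))) :=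
    (convex_convexHull ℝ _).openSegment_subset (vmem ha) (vmem hc) hz
  have h1 := hE.2 (vmem ha) (vmem hc) ⟨hzσ, hzτ⟩ hz
  have h2 := hE.2 (vmem hc) (vmem ha) ⟨hzσ, hzτ⟩ (by rwa [openSegment_symm])
  exact ⟨vertex_mem hv h1.2, vertex_mem hv h2.2⟩

lemma no_cross {v : Fin N → ℝ × ℝ} (hv : IsPar v) {T : Finset (Finset (Fin N))}
    (hT : IsTriangulation v T) {σ τ : Finset (Fin N)} (hσ : σ ∈ T) (hτ : τ ∈ T)
    {a b c d : Fin N} (ha : a ∈ σ) (hc : c ∈ σ) (hb : b ∈ τ) (hd : d ∈ τ)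
    (hab : a < b) (hbc : b < c) (hcd : c < d) : False := by
  have : ∃ z, z ∈ openSegment ℝ (v a) (v c) ∧ z ∈ openSegment ℝ (v b) (v d) := by
    rw [hv a, hv b, hv c, hv d]
    have h1 := sub_pos.2 (cast_lt' hab)
    have h2 := sub_pos.2 (cast_lt' hbc)
    have h3 := sub_pos.2 (cast_lt' hcd)
    generalize ((a : ℕ) : ℝ) = a at *
    generalize ((b : ℕ) : ℝ) = b at *
    generalize ((c : ℕ) : ℝ) = c at *
    generalize ((d : ℕ) : ℝ) = d at *
    have hD : 0 < d + b - a - c := by linarith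
    have hac : 0 < c - a := by linarith
    have hbd : 0 < d - b := by linarith
    have had : 0 < d - a := by linarith
    refine ⟨((b * d - a * c) / (d + b - a - c),
      (a + c) * ((b * d - a * c) / (d + b - a - c)) - a * c), ?_, ?_⟩
    · refine ⟨(d - c) * (c - b) / ((d + b - a - c) * (c - a)),
        (b - a) * (d - a) / ((d + b - a - c) * (c - a)), by positivity, by positivity, ?_, ?_⟩
      · field_simp; ring
      · ext
        · simp; field_simp; ring
        · simp; field_simp; ring
    · refine ⟨(d - a) * (d - c) / ((d + b - a - c) * (d - b)),
        (b - a) * (c - b) / ((d + b - a - c) * (d - b)), by positivity, by positivity, ?_, ?_⟩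
      · field_simp; ring
      · ext
        · simp; field_simp; ring
        · simp; field_simp; ring
  obtain ⟨z, hz1, hz2⟩ := this
  have hzτ := (convex_convexHull ℝ _).openSegment_subset (vmem (v := v) hb) (vmem (v := v) hd) hz2
  obtain ⟨ha', hc'⟩ := edge_mem hv hT hσ hτ ha hc hz1 hzτ
  have hsub : ({a, b, c, d} : Finset (Fin N)) ⊆ τ := by
    intro x hx
    simp only [Finset.mem_insert, Finset.mem_singleton] at hx
    rcases hx with rfl | rfl | rfl | rfl <;> assumption
  have h4 : ({a, b, c, d} : Finset (Fin N)).card = 4 := by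
    have n1 := hab.ne
    have n2 := hbc.ne
    have n3 := hcd.ne
    have n4 := (hab.trans hbc).ne
    have n5 := (hbc.trans hcd).ne
    have n6 := (hab.trans (hbc.trans hcd)).ne
    simp [n1, n2, n3, n4, n5, n6]
  have := Finset.card_le_card hsub
  rw [h4, (hT.1 τ hτ).1] at this
  omega

end Parab

namespace Parab

/-- `(a, c)` is an edge of `T` or the hull edge. -/
def Edge {N : ℕ} (T : Finset (Finset (Fin N))) (a c : Fin N) : Prop :=
  (∃ σ ∈ T, a ∈ σ ∧ c ∈ σ) ∨ ((a : ℕ) = 0 ∧ (c : ℕ) + 1 = N)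

lemma hull_edge_mem {N : ℕ} {v : Fin N → ℝ × ℝ} (hv : IsPar v) {τ : Finset (Fin N)} {a c : Fin N}
    (ha : (a : ℕ) = 0) (hc : (c : ℕ) + 1 = N) (hac : (a : ℕ) + 1 < c)
    (h : (1 / 2 : ℝ) • v a + (1 / 2 : ℝ) • v c ∈ convexHull ℝ (v '' (τ : Set (Fin N)))) :
    a ∈ τ ∧ c ∈ τ := by
  have hc1 : (1 : ℝ) < ((c : ℕ) : ℝ) := by exact_mod_cast (by omega : 1 < (c : ℕ))
  constructor
  · by_contra hcon
    have := ell_le (p := 1) (q := ((c : ℕ) : ℝ)) (fun i hi => ?_) h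
    · rw [ell_comb _ _ _ _ _ _ (by norm_num), ell_v hv, ell_v hv, ha] at this
      norm_num at this
      linarith
    · rw [ell_v hv]
      have h1 : i ≠ a := by rintro rfl; exact hcon hi
      have h2 : 1 ≤ (i : ℕ) := by
        have : (i : ℕ) ≠ a := fun h => h1 (Fin.ext h)
        omega
      have h3 : (i : ℕ) ≤ c := by have := i.2; omega
      have h2' : (1 : ℝ) ≤ ((i : ℕ) : ℝ) := by exact_mod_cast h2
      have h3' : ((i : ℕ) : ℝ) ≤ ((c : ℕ) : ℝ) := by exact_mod_cast h3
      exact mul_nonpos_of_nonneg_of_nonpos (by linarith) (by linarith)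
  · by_contra hcon
    have := ell_le (p := 0) (q := ((c : ℕ) : ℝ) - 1) (fun i hi => ?_) h
    · rw [ell_comb _ _ _ _ _ _ (by norm_num), ell_v hv, ell_v hv, ha] at this
      norm_num at this
      linarith
    · rw [ell_v hv]
      have h1 : i ≠ c := by rintro rfl; exact hcon hi
      have h2 : (i : ℕ) + 1 ≤ c := by
        have : (i : ℕ) ≠ c := fun h => h1 (Fin.ext h)
        have := i.2
        omega
      have h2' : ((i : ℕ) : ℝ) + 1 ≤ ((c : ℕ) : ℝ) := by exact_mod_cast h2
      have h3' : (0 : ℝ) ≤ ((i : ℕ) : ℝ) := by positivity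
      exact mul_nonpos_of_nonneg_of_nonpos (by linarith) (by linarith)

lemma exists_below {N : ℕ} {v : Fin N → ℝ × ℝ} (hv : IsPar v) {T : Finset (Finset (Fin N))}
    (hT : IsTriangulation v T) {a c : Fin N} (hE : Edge T a c) (hac : (a : ℕ) + 1 < c) :
    ∃ b, a < b ∧ b < c ∧ ({a, b, c} : Finset (Fin N)) ∈ T := by
  obtain ⟨j, hj⟩ : ∃ j : Fin N, (j : ℕ) = a + 1 := ⟨⟨a + 1, by have := c.2; omega⟩, rfl⟩
  set m : ℝ × ℝ := (1 / 2 : ℝ) • v a + (1 / 2 : ℝ) • v c with hm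
  set e : ℕ → ℝ := fun k => 1 / ((k : ℝ) + 1) with he
  have he0 : ∀ k, 0 < e k := fun k => by simp only [he]; positivity
  have he1 : ∀ k, e k ≤ 1 := fun k => by
    simp only [he]; rw [div_le_one (by positivity)]; have : (0 : ℝ) ≤ k := by positivity
    linarith
  set p : ℕ → ℝ × ℝ := fun k => (1 - e k) • m + e k • v j with hp
  have hmH : m ∈ convexHull ℝ (Set.range v) :=
    convex_convexHull ℝ _ (subset_convexHull ℝ _ (Set.mem_range_self a))
      (subset_convexHull ℝ _ (Set.mem_range_self c))
      (by norm_num) (by norm_num) (by norm_num)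
  have hpH : ∀ k, ∃ τ ∈ T, p k ∈ convexHull ℝ (v '' (τ : Set (Fin N))) := by
    intro k
    have : p k ∈ convexHull ℝ (Set.range v) :=
      convex_convexHull ℝ _ hmH (subset_convexHull ℝ _ ⟨j, rfl⟩)
        (by linarith [he1 k]) (he0 k).le (by ring)
    rw [← hT.2.1] at this
    simpa using this
  have hfreq : ∃ τ ∈ T, ∃ᶠ k in Filter.atTop, p k ∈ convexHull ℝ (v '' (τ : Set (Fin N))) := by
    by_contra hcon
    push Not at hcon
    have h2 : ∀ᶠ k in Filter.atTop, ∀ τ ∈ T, p k ∉ convexHull ℝ (v '' (τ : Set (Fin N))) := by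
      rw [Filter.eventually_all_finset]
      exact hcon
    obtain ⟨k, hk⟩ := h2.exists
    obtain ⟨τ, h, h'⟩ := hpH k
    exact hk τ h h'
  obtain ⟨τ, hτ, hf⟩ := hfreq
  have hlim : Filter.Tendsto p Filter.atTop (nhds m) := by
    have h1 : Filter.Tendsto e Filter.atTop (nhds 0) := tendsto_one_div_add_atTop_nhds_zero_nat
    have h2 : Filter.Tendsto p Filter.atTop (nhds ((1 - (0 : ℝ)) • m + (0 : ℝ) • v j)) :=
      ((tendsto_const_nhds.sub h1).smul_const m).add (h1.smul_const (v j))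
    simpa using h2
  have hclosed : IsClosed (convexHull ℝ (v '' (τ : Set (Fin N)))) :=
    ((τ.finite_toSet.image v).isCompact_convexHull ℝ).isClosed
  have hmτ : m ∈ convexHull ℝ (v '' (τ : Set (Fin N))) := hclosed.mem_of_frequently_of_tendsto hf hlim
  have hacτ : a ∈ τ ∧ c ∈ τ := by
    rcases hE with ⟨σ, hσ, h1, h2⟩ | ⟨h1, h2⟩
    · exact edge_mem hv hT hσ hτ h1 h2
        ⟨1 / 2, 1 / 2, by norm_num, by norm_num, by norm_num, rfl⟩ hmτ
    · exact hull_edge_mem hv h1 h2 hac hmτ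
  have hx : ∃ x ∈ τ, a < x ∧ x < c := by
    by_contra hcon
    push Not at hcon
    obtain ⟨k, hk⟩ := hf.exists
    have := ell_ge (p := ((a : ℕ) : ℝ)) (q := ((c : ℕ) : ℝ)) (fun i hi => ?_) hk
    · simp only [hp] at this
      rw [ell_comb _ _ _ _ _ _ (by ring), hm, ell_comb _ _ _ _ _ _ (by norm_num),
        ell_v hv, ell_v hv, ell_v hv, hj] at this
      have hac' : ((a : ℕ) : ℝ) + 1 < ((c : ℕ) : ℝ) := by exact_mod_cast hac
      push_cast at this
      have h3 := mul_pos (he0 k) (sub_pos.2 hac')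
      nlinarith
    · rw [ell_v hv]
      rcases le_or_gt i a with h | h
      · have h1 := cast_le' h
        have h2 : ((a : ℕ) : ℝ) ≤ ((c : ℕ) : ℝ) := by exact_mod_cast (by omega : (a : ℕ) ≤ c)
        exact mul_nonneg_of_nonpos_of_nonpos (by linarith) (by linarith)
      · have h1 := cast_le' (hcon i hi h)
        have h2 := cast_lt' h
        exact mul_nonneg (by linarith) (by linarith)
  obtain ⟨x, hxτ, hax, hxc⟩ := hx
  refine ⟨x, hax, hxc, ?_⟩
  have hsub : ({a, x, c} : Finset (Fin N)) ⊆ τ := by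
    intro y hy
    simp only [Finset.mem_insert, Finset.mem_singleton] at hy
    rcases hy with rfl | rfl | rfl
    exacts [hacτ.1, hxτ, hacτ.2]
  have hcard : ({a, x, c} : Finset (Fin N)).card = 3 := by
    simp [hax.ne, hxc.ne, (hax.trans hxc).ne]
  rw [Finset.eq_of_subset_of_card_le hsub (by rw [hcard, (hT.1 τ hτ).1])]
  exact hτ

/-- `σ` lies in the interval `[a, c]`. -/
def In {N : ℕ} (a c : Fin N) (σ : Finset (Fin N)) : Prop := ∀ i ∈ σ, a ≤ i ∧ i ≤ c

open Classical in
/-- partial GKZ weights of the triangles in `[a, c]`. -/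
noncomputable def phi {N : ℕ} (v : Fin N → ℝ × ℝ) (T : Finset (Finset (Fin N))) (a c : Fin N) :
    Fin N → ℝ :=
  fun i => ∑ σ ∈ T, if In a c σ ∧ i ∈ σ then triArea v σ else 0

lemma split_cases {N : ℕ} {v : Fin N → ℝ × ℝ} (hv : IsPar v) {T : Finset (Finset (Fin N))}
    (hT : IsTriangulation v T) {a b c : Fin N} (hab : a < b) (hbc : b < c)
    (habc : ({a, b, c} : Finset (Fin N)) ∈ T) {σ : Finset (Fin N)} (hσ : σ ∈ T)
    (hin : In a c σ) (h1 : ¬ In a b σ) (h2 : ¬ In b c σ) : σ = {a, b, c} := by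
  have ma : a ∈ ({a, b, c} : Finset (Fin N)) := by simp
  have mb : b ∈ ({a, b, c} : Finset (Fin N)) := by simp
  have mc : c ∈ ({a, b, c} : Finset (Fin N)) := by simp
  obtain ⟨y, hy, hby⟩ : ∃ y ∈ σ, b < y := by
    by_contra hcon
    push Not at hcon
    exact h1 fun i hi => ⟨(hin i hi).1, hcon i hi⟩
  obtain ⟨x, hx, hxb⟩ : ∃ x ∈ σ, x < b := by
    by_contra hcon
    push Not at hcon
    exact h2 fun i hi => ⟨hcon i hi, (hin i hi).2⟩
  have hsub : σ ⊆ {a, b, c} := by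
    intro z hz
    rcases lt_trichotomy z b with h | h | h
    · have : z = a := by
        by_contra hne
        have : a < z := lt_of_le_of_ne (hin z hz).1 (Ne.symm hne)
        exact no_cross hv hT habc hσ ma mb hz hy this h hby
      simp [this]
    · simp [h]
    · have : z = c := by
        by_contra hne
        have : z < c := lt_of_le_of_ne (hin z hz).2 hne
        exact no_cross hv hT hσ habc hx hz mb mc hxb h this
      simp [this]
  refine Finset.eq_of_subset_of_card_le hsub ?_
  rw [(hT.1 σ hσ).1]
  exact Finset.card_le_three

lemma phi_split {N : ℕ} {v : Fin N → ℝ × ℝ} (hv : IsPar v) {T : Finset (Finset (Fin N))}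
    (hT : IsTriangulation v T) {a b c : Fin N} (hab : a < b) (hbc : b < c)
    (habc : ({a, b, c} : Finset (Fin N)) ∈ T) :
    phi v T a c = phi v T a b + phi v T b c + (Pi.single a (triArea v {a, b, c}) +
      Pi.single b (triArea v {a, b, c}) + Pi.single c (triArea v {a, b, c})) := by
  classical
  have hsing : (Pi.single a (triArea v {a, b, c}) +
      Pi.single b (triArea v {a, b, c}) + Pi.single c (triArea v {a, b, c}) : Fin N → ℝ) =
      fun i => ∑ σ ∈ T, if σ = {a, b, c} ∧ i ∈ σ then triArea v σ else 0 := by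
    funext i
    rw [Finset.sum_eq_single_of_mem _ habc]
    · have n1 := hab.ne
      have n2 := hbc.ne
      have n3 := (hab.trans hbc).ne
      by_cases ha : i = a
      · subst ha; simp [n1, n3]
      by_cases hb : i = b
      · subst hb; simp [n1.symm, n2]
      by_cases hc : i = c
      · subst hc; simp [n2.symm, n3.symm]
      simp [ha, hb, hc]
    · intro σ _ hne
      simp [hne]
  rw [hsing]
  funext i
  simp only [phi, Pi.add_apply, ← Finset.sum_add_distrib]
  refine Finset.sum_congr rfl fun σ hσ => ?_
  by_cases hi : i ∈ σ
  swap
  · simp [hi]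
  simp only [hi, and_true]
  have hcard := (hT.1 σ hσ).1
  have i1 : In a b σ → In a c σ := fun h i hi => ⟨(h i hi).1, (h i hi).2.trans hbc.le⟩
  have i2 : In b c σ → In a c σ := fun h i hi => ⟨hab.le.trans (h i hi).1, (h i hi).2⟩
  have i3 : σ = {a, b, c} → In a c σ := by
    rintro rfl i hi
    simp only [Finset.mem_insert, Finset.mem_singleton] at hi
    rcases hi with rfl | rfl | rfl
    exacts [⟨le_rfl, (hab.trans hbc).le⟩, ⟨hab.le, hbc.le⟩, ⟨(hab.trans hbc).le, le_rfl⟩]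
  have d12 : In a b σ → ¬ In b c σ := by
    intro h h'
    have : σ ⊆ {b} := fun i hi => by
      simp only [Finset.mem_singleton]
      exact le_antisymm (h i hi).2 (h' i hi).1
    have := Finset.card_le_card this
    simp at this; omega
  have d13 : σ = {a, b, c} → ¬ In a b σ := by
    rintro rfl h
    exact absurd (h c (by simp)).2 (not_le.2 hbc)
  have d23 : σ = {a, b, c} → ¬ In b c σ := by
    rintro rfl h
    exact absurd (h a (by simp)).1 (not_le.2 hab)
  by_cases h3 : σ = {a, b, c}
  · rw [if_pos (i3 h3), if_neg (d13 h3), if_neg (d23 h3), if_pos h3]; ring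
  by_cases h1 : In a b σ
  · rw [if_pos (i1 h1), if_pos h1, if_neg (d12 h1), if_neg h3]; ring
  by_cases h2 : In b c σ
  · rw [if_pos (i2 h2), if_neg h1, if_pos h2, if_neg h3]; ring
  have h4 : ¬ In a c σ := fun h => h3 (split_cases hv hT hab hbc habc hσ h h1 h2)
  simp [h1, h2, h3, h4]

lemma phi_base {N : ℕ} {v : Fin N → ℝ × ℝ} {T : Finset (Finset (Fin N))}
    (hT : IsTriangulation v T) {a c : Fin N} (h : (c : ℕ) = a + 1) : phi v T a c = 0 := by
  classical
  funext i
  simp only [phi, Pi.zero_apply]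
  refine Finset.sum_eq_zero fun σ hσ => if_neg ?_
  rintro ⟨hin, -⟩
  have : σ ⊆ {a, c} := fun i hi => by
    have h1 := hin i hi
    simp only [Finset.mem_insert, Finset.mem_singleton, Fin.ext_iff]
    have h2 : (a : ℕ) ≤ i := h1.1
    have h3 : (i : ℕ) ≤ c := h1.2
    omega
  have h2 := (Finset.card_le_card this).trans Finset.card_le_two
  rw [(hT.1 σ hσ).1] at h2
  omega

lemma phi_mom {N : ℕ} {v : Fin N → ℝ × ℝ} (hv : IsPar v) {T : Finset (Finset (Fin N))}
    (hT : IsTriangulation v T) (k : ℕ) : ∀ a c : Fin N, (c : ℕ) = a + 1 + k → Edge T a c →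
    Mom (2 * kap) a c (phi v T a c) := by
  induction k using Nat.strong_induction_on with
  | _ k ih =>
    intro a c hk hE
    rcases Nat.eq_zero_or_pos k with rfl | hpos
    · rw [phi_base hT hk]
      exact Mom.base _ _ _ hk
    · obtain ⟨b, hab, hbc, habc⟩ := exists_below hv hT hE (by omega)
      rw [phi_split hv hT hab hbc habc]
      have hab' : (a : ℕ) < b := hab
      have hbc' : (b : ℕ) < c := hbc
      refine Mom.step hab.le hbc.le ?_ ?_ _ (triArea_eq hv hab hbc)
      · exact ih (b - a - 1) (by omega) a b (by omega) (Or.inl ⟨_, habc, by simp, by simp⟩)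
      · exact ih (c - b - 1) (by omega) b c (by omega) (Or.inl ⟨_, habc, by simp, by simp⟩)

lemma inner_f {N : ℕ} (i k : Fin N) :
    inner ℝ (∑ j ∈ Finset.Iic i, EuclideanSpace.single j (1 : ℝ) : EuclideanSpace ℝ (Fin N))
      (∑ j ∈ Finset.Iic k, EuclideanSpace.single j (1 : ℝ)) =
    ((((i : ℕ) : ℝ) + ((k : ℕ) : ℝ)) - |((i : ℕ) : ℝ) - ((k : ℕ) : ℝ)|) / 2 + 1 := by
  have h : inner ℝ (∑ j ∈ Finset.Iic i, EuclideanSpace.single j (1 : ℝ) : EuclideanSpace ℝ (Fin N))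
      (∑ j ∈ Finset.Iic k, EuclideanSpace.single j (1 : ℝ)) =
      (((Finset.Iic i ∩ Finset.Iic k).card : ℕ) : ℝ) := by
    simp only [sum_inner, inner_sum, EuclideanSpace.inner_single_left, map_one, one_mul,
      PiLp.single_apply, Finset.sum_ite_eq']
    rw [Finset.card_eq_sum_ones, Finset.inter_comm, ← Finset.filter_mem_eq_inter, Finset.sum_filter]
    push_cast
    rfl
  rw [h]
  rcases le_total i k with hik | hik
  · rw [Finset.inter_eq_left.2 (Finset.Iic_subset_Iic.2 hik), Fin.card_Iic,
      abs_of_nonpos (by linarith [cast_le' hik])]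
    push_cast; ring
  · rw [Finset.inter_eq_right.2 (Finset.Iic_subset_Iic.2 hik), Fin.card_Iic,
      abs_of_nonneg (by linarith [cast_le' hik])]
    push_cast; ring

lemma norm_sq_eq {N : ℕ} (φ : Fin N → ℝ) (f : Fin N → EuclideanSpace ℝ (Fin N))
    (hf : ∀ i, f i = ∑ j ∈ Finset.Iic i, EuclideanSpace.single j (1 : ℝ)) :
    ‖∑ i, φ i • f i‖ ^ 2 = m0 φ * m1 φ - B φ φ / 2 + m0 φ * m0 φ := by
  rw [← real_inner_self_eq_norm_sq]
  simp only [sum_inner, inner_sum, real_inner_smul_left, real_inner_smul_right]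
  simp only [hf, inner_f]
  have h1 : m0 φ * m1 φ = (m0 φ * m1 φ + m1 φ * m0 φ) / 2 := by ring
  rw [h1]
  simp only [m0, m1, B, Finset.sum_mul_sum, ← Finset.sum_add_distrib, Finset.sum_div,
    ← Finset.sum_sub_distrib]
  refine Finset.sum_congr rfl fun i _ => Finset.sum_congr rfl fun k _ => ?_
  rw [abs_sub_comm ((k : ℕ) : ℝ)]
  ring

end Parab

/-- All GKZ vectors of triangulations of the points `(i, i²)`, `i = 0, …, n+2`,
on the standard parabola, with respect to the partial sums of the standard
basis vectors, have the same Euclidean norm. -/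
theorem gkz_norm_eq_of_parabola (n : ℕ)
    (v : Fin (n + 3) → ℝ × ℝ)
    (hv : ∀ i : Fin (n + 3), v i = (((i : ℕ) : ℝ), ((i : ℕ) : ℝ) ^ 2))
    (f : Fin (n + 3) → EuclideanSpace ℝ (Fin (n + 3)))
    (hf : ∀ i, f i = ∑ j ∈ Finset.Iic i, EuclideanSpace.single j (1 : ℝ))
    (T T' : Finset (Finset (Fin (n + 3))))
    (hT : IsTriangulation v T) (hT' : IsTriangulation v T') :
    ‖GKZ v f T‖ = ‖GKZ v f T'‖ := by
  classical
  have key : ∀ S : Finset (Finset (Fin (n + 3))),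
      GKZ v f S = ∑ i, Parab.phi v S 0 (Fin.last (n + 2)) i • f i := by
    intro S
    rw [GKZ]
    refine Finset.sum_congr rfl fun i _ => ?_
    rw [Parab.phi, Finset.sum_filter]
    congr 1
    refine Finset.sum_congr rfl fun σ _ => ?_
    have : Parab.In 0 (Fin.last (n + 2)) σ := fun i _ => ⟨Fin.zero_le i, Fin.le_last i⟩
    simp [this]
  have hM : ∀ S, IsTriangulation v S →
      Parab.Mom (2 * Parab.kap) 0 (Fin.last (n + 2)) (Parab.phi v S 0 (Fin.last (n + 2))) := by
    intro S hS
    exact Parab.phi_mom hv hS (n + 1) _ _ (by simp; omega) (Or.inr ⟨by simp, by simp⟩)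
  have h1 := hM T hT
  have h2 := hM T' hT'
  rw [← sq_eq_sq₀ (norm_nonneg _) (norm_nonneg _), key, key, Parab.norm_sq_eq _ f hf,
    Parab.norm_sq_eq _ f hf, h1.h0 _ rfl, h1.h1 _ rfl, h1.hq _ rfl, h2.h0 _ rfl, h2.h1 _ rfl,
    h2.hq _ rfl]
end

section
/- Let n ≥ 0 and let v_i = (p(a + i·b), q(a + i·b)) ∈ ℝ² for i = 0, …, n+2, where p, q ∈ ℝ[t] are polynomials of degree at most 2 with {p, q, 1} linearly independent in ℝ[t], and a, b ∈ ℝ with b ≠ 0. Let f_0, …, f_{n+2} ∈ ℝ^{n+2} be affinely independent (the vertices of an (n+2)-dimensional simplex). Then all GKZ vectors of triangulations of the configuration {v_0, …, v_{n+2}} lie on a common ellipsoid: there exist an invertible affine map M : ℝ^{n+2} → ℝ^{n+2} and a real number r > 0 such that ‖M(GKZ(T))‖ = r for every triangulation T. -/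
open MeasureTheory

/-- doubled area of a triangle `(a, a²), (b, b²), (c, c²)` -/
def tA (t : ℤ × ℤ × ℤ) : ℤ := (t.2.1 - t.1) * (t.2.2 - t.2.1) * (t.2.2 - t.1)

/-- sum of the vertices -/
def tS (t : ℤ × ℤ × ℤ) : ℤ := t.1 + t.2.1 + t.2.2

/-- sum of a function over the vertices -/
def tV (t : ℤ × ℤ × ℤ) (g : ℤ → ℤ) : ℤ := g t.1 + g t.2.1 + g t.2.2

/-- sum of the distances between vertices -/
def tG (s t : ℤ × ℤ × ℤ) : ℤ := tV s (fun u => tV t (fun w => |u - w|))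

/-- `x < y` are two vertices of `t` -/
def tEdge (t : ℤ × ℤ × ℤ) (x y : ℤ) : Prop :=
  (x = t.1 ∧ y = t.2.1) ∨ (x = t.1 ∧ y = t.2.2) ∨ (x = t.2.1 ∧ y = t.2.2)

/-- no two edges cross -/
def NonCross (T : Finset (ℤ × ℤ × ℤ)) : Prop :=
  ∀ s ∈ T, ∀ t ∈ T, ∀ x y u w, tEdge s x y → tEdge t u w → ¬ (x < u ∧ u < y ∧ y < w)

/-- energy pairing -/
def tF (S T : Finset (ℤ × ℤ × ℤ)) : ℤ := ∑ s ∈ S, ∑ t ∈ T, tA s * tA t * tG s t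

lemma tG_comm (s t : ℤ × ℤ × ℤ) : tG s t = tG t s := by
  simp only [tG, tV, abs_sub_comm]
  simp only [abs_sub_comm t.1, abs_sub_comm t.2.1, abs_sub_comm t.2.2]
  ring

lemma tF_comm (S T : Finset (ℤ × ℤ × ℤ)) : tF S T = tF T S := by
  unfold tF
  rw [Finset.sum_comm]
  refine Finset.sum_congr rfl fun t _ => Finset.sum_congr rfl fun s _ => ?_
  rw [tG_comm]; ring

lemma tF_union_left (S S' T : Finset (ℤ × ℤ × ℤ)) (h : Disjoint S S') :
    tF (S ∪ S') T = tF S T + tF S' T := by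
  unfold tF
  rw [Finset.sum_union h]

lemma tF_union_right (S S' T : Finset (ℤ × ℤ × ℤ)) (h : Disjoint S S') :
    tF T (S ∪ S') = tF T S + tF T S' := by
  rw [tF_comm, tF_union_left _ _ _ h, tF_comm S, tF_comm S']

/-- all triangles have vertices in `[a, c]` in increasing order -/
def Inside (a c : ℤ) (T : Finset (ℤ × ℤ × ℤ)) : Prop :=
  ∀ t ∈ T, a ≤ t.1 ∧ t.1 < t.2.1 ∧ t.2.1 < t.2.2 ∧ t.2.2 ≤ c

/-- the conclusion of the main combinatorial lemma -/
def Good (a c : ℤ) (T : Finset (ℤ × ℤ × ℤ)) : Prop :=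
  3 * ∑ t ∈ T, tA t ≤ (c - a) ^ 3 - (c - a) ∧
  (3 * ∑ t ∈ T, tA t = (c - a) ^ 3 - (c - a) →
    2 * ∑ t ∈ T, tA t * tS t = ((c - a) ^ 3 - (c - a)) * (a + c) ∧
    105 * tF T T = 4 * (c - a) + 35 * (c - a) ^ 3 - 84 * (c - a) ^ 5 + 45 * (c - a) ^ 7)

lemma tF_sep (a b c : ℤ) (S T : Finset (ℤ × ℤ × ℤ)) (hS : Inside a b S) (hT : Inside b c T) :
    tF S T = 3 * (∑ s ∈ S, tA s) * (∑ t ∈ T, tA t * tS t)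
      - 3 * (∑ s ∈ S, tA s * tS s) * (∑ t ∈ T, tA t) := by
  unfold tF
  rw [mul_assoc, mul_assoc, Finset.sum_mul_sum, Finset.sum_mul_sum, Finset.mul_sum, Finset.mul_sum,
    ← Finset.sum_sub_distrib]
  refine Finset.sum_congr rfl fun s hs => ?_
  rw [Finset.mul_sum, Finset.mul_sum, ← Finset.sum_sub_distrib]
  refine Finset.sum_congr rfl fun t ht => ?_
  have h1 := hS s hs
  have h2 := hT t ht
  have : tG s t = 3 * tS t - 3 * tS s := by
    simp only [tG, tV, tS]
    have key : ∀ u w : ℤ, u ≤ b → b ≤ w → |u - w| = w - u := by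
      intro u w hu hw
      rw [abs_of_nonpos (by omega)]; ring
    rw [key, key, key, key, key, key, key, key, key] <;> first | ring | omega
  rw [this]; ring

lemma tF_left (a b c : ℤ) (hab : a < b) (hbc : b < c) (S : Finset (ℤ × ℤ × ℤ))
    (hS : Inside a b S) :
    tF S {(a, b, c)} = tA (a, b, c) * (3 * (b + c - a) * (∑ s ∈ S, tA s)
      - ∑ s ∈ S, tA s * tS s) := by
  unfold tF
  rw [mul_sub, ← mul_assoc, Finset.mul_sum, Finset.mul_sum, ← Finset.sum_sub_distrib]
  refine Finset.sum_congr rfl fun s hs => ?_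
  rw [Finset.sum_singleton]
  have h1 := hS s hs
  have : tG s (a, b, c) = 3 * (b + c - a) - tS s := by
    simp only [tG, tV, tS]
    have key : ∀ u : ℤ, a ≤ u → u ≤ b → |u - a| + |u - b| + |u - c| = b + c - a - u := by
      intro u hu hw
      rw [abs_of_nonneg (by omega : 0 ≤ u - a), abs_of_nonpos (by omega : u - b ≤ 0),
        abs_of_nonpos (by omega : u - c ≤ 0)]; ring
    rw [key, key, key] <;> first | ring | omega
  rw [this]; ring

lemma tF_right (a b c : ℤ) (hab : a < b) (hbc : b < c) (S : Finset (ℤ × ℤ × ℤ))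
    (hS : Inside b c S) :
    tF S {(a, b, c)} = tA (a, b, c) * (3 * (c - a - b) * (∑ s ∈ S, tA s)
      + ∑ s ∈ S, tA s * tS s) := by
  unfold tF
  rw [mul_add, ← mul_assoc, Finset.mul_sum, Finset.mul_sum, ← Finset.sum_add_distrib]
  refine Finset.sum_congr rfl fun s hs => ?_
  rw [Finset.sum_singleton]
  have h1 := hS s hs
  have : tG s (a, b, c) = 3 * (c - a - b) + tS s := by
    simp only [tG, tV, tS]
    have key : ∀ u : ℤ, b ≤ u → u ≤ c → |u - a| + |u - b| + |u - c| = c - a - b + u := by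
      intro u hu hw
      rw [abs_of_nonneg (by omega : 0 ≤ u - a), abs_of_nonneg (by omega : 0 ≤ u - b),
        abs_of_nonpos (by omega : u - c ≤ 0)]; ring
    rw [key, key, key] <;> first | ring | omega
  rw [this]; ring

lemma tF_self (a b c : ℤ) (hab : a < b) (hbc : b < c) :
    tF {(a, b, c)} {(a, b, c)} = tA (a, b, c) ^ 2 * (4 * (c - a)) := by
  unfold tF
  rw [Finset.sum_singleton, Finset.sum_singleton]
  have : tG (a, b, c) (a, b, c) = 4 * (c - a) := by
    simp only [tG, tV]
    rw [abs_of_nonneg (by omega : 0 ≤ b - a), abs_of_nonneg (by omega : 0 ≤ c - a),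
      abs_of_nonneg (by omega : 0 ≤ c - b), abs_of_nonpos (by omega : a - b ≤ 0),
      abs_of_nonpos (by omega : a - c ≤ 0), abs_of_nonpos (by omega : b - c ≤ 0)]
    simp
    ring
  rw [this]; ring

/-- gluing two good families along a triangle -/
lemma good_glue (a b c : ℤ) (hab : a < b) (hbc : b < c) (S T : Finset (ℤ × ℤ × ℤ))
    (hS : Inside a b S) (hT : Inside b c T) (gS : Good a b S) (gT : Good b c T) :
    Good a c ((S ∪ T) ∪ {(a, b, c)}) := by
  have d1 : Disjoint S T := by
    rw [Finset.disjoint_left]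
    intro t h1 h2
    have := hS t h1
    have := hT t h2
    omega
  have d2 : Disjoint (S ∪ T) {(a, b, c)} := by
    rw [Finset.disjoint_singleton_right, Finset.mem_union]
    rintro (h | h)
    · have := hS _ h
      simp at this
      omega
    · have := hT _ h
      simp at this
      omega
  unfold Good at *
  rw [tF_union_left _ _ _ d2, tF_union_right _ _ _ d2, tF_union_right _ _ _ d2,
    tF_union_left _ _ _ d1, tF_union_left _ _ _ d1, tF_union_right _ _ _ d1,
    tF_union_right _ _ _ d1, tF_union_right _ _ _ d1,
    tF_comm T S, tF_comm {(a, b, c)} S, tF_comm {(a, b, c)} T, tF_self a b c hab hbc,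
    tF_left a b c hab hbc S hS, tF_right a b c hab hbc T hT, tF_sep a b c S T hS hT,
    Finset.sum_union d2, Finset.sum_union d2, Finset.sum_union d1, Finset.sum_union d1,
    Finset.sum_singleton, Finset.sum_singleton]
  obtain ⟨p, rfl⟩ : ∃ p, b = a + p := ⟨b - a, by ring⟩
  obtain ⟨q, rfl⟩ : ∃ q, c = a + p + q := ⟨c - (a + p), by ring⟩
  generalize ∑ s ∈ S, tA s = m1 at *
  generalize ∑ s ∈ T, tA s = m2 at *
  generalize ∑ s ∈ S, tA s * tS s = x1 at *
  generalize ∑ s ∈ T, tA s * tS s = x2 at *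
  generalize tF S S = e1 at *
  generalize tF T T = e2 at *
  have hA : tA (a, a + p, a + p + q) = p * q * (p + q) := by simp only [tA]; ring
  have hX : tS (a, a + p, a + p + q) = 3 * a + 2 * p + q := by simp only [tS]; ring
  rw [hA, hX]
  obtain ⟨l1, g1⟩ := gS
  obtain ⟨l2, g2⟩ := gT
  have i1 : a + p - a = p := by ring
  have i2 : a + p + q - (a + p) = q := by ring
  have i3 : a + p + q - a = p + q := by ring
  rw [i1] at l1 g1
  rw [i2] at l2 g2
  rw [i3]
  refine ⟨by nlinarith, fun h => ?_⟩
  have k : 3 * m1 + 3 * m2 = p ^ 3 - p + (q ^ 3 - q) := by linear_combination h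
  have k1 : 3 * m1 = p ^ 3 - p := by linarith
  have k2 : 3 * m2 = q ^ 3 - q := by linarith
  obtain ⟨r1, s1⟩ := g1 k1
  obtain ⟨r2, s2⟩ := g2 k2
  have k1' : (m1 : ℚ) = (p ^ 3 - p) / 3 := by
    have : (3 * m1 : ℚ) = p ^ 3 - p := by exact_mod_cast k1
    linarith
  have k2' : (m2 : ℚ) = (q ^ 3 - q) / 3 := by
    have : (3 * m2 : ℚ) = q ^ 3 - q := by exact_mod_cast k2
    linarith
  have r1' : (x1 : ℚ) = (p ^ 3 - p) * (a + (a + p)) / 2 := by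
    have : (2 * x1 : ℚ) = (p ^ 3 - p) * (a + (a + p)) := by exact_mod_cast r1
    linarith
  have r2' : (x2 : ℚ) = (q ^ 3 - q) * (a + p + (a + p + q)) / 2 := by
    have : (2 * x2 : ℚ) = (q ^ 3 - q) * (a + p + (a + p + q)) := by exact_mod_cast r2
    linarith
  have s1' : (e1 : ℚ) = (4 * p + 35 * p ^ 3 - 84 * p ^ 5 + 45 * p ^ 7) / 105 := by
    have : (105 * e1 : ℚ) = 4 * p + 35 * p ^ 3 - 84 * p ^ 5 + 45 * p ^ 7 := by exact_mod_cast s1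
    linarith
  have s2' : (e2 : ℚ) = (4 * q + 35 * q ^ 3 - 84 * q ^ 5 + 45 * q ^ 7) / 105 := by
    have : (105 * e2 : ℚ) = 4 * q + 35 * q ^ 3 - 84 * q ^ 5 + 45 * q ^ 7 := by exact_mod_cast s2
    linarith
  constructor
  · have : (2 * (x1 + x2 + p * q * (p + q) * (3 * a + 2 * p + q)) : ℚ)
        = ((p + q) ^ 3 - (p + q)) * (a + (a + p + q)) := by
      rw [r1', r2']; ring
    exact_mod_cast this
  · rw [← @Int.cast_inj ℚ]
    push_cast
    rw [s1', s2', r1', r2', k1', k2']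
    ring

/-- existence of a triangle at the long edge, or a noncrossing candidate -/
lemma good_of_tri (a b c : ℤ) (T : Finset (ℤ × ℤ × ℤ)) (hT : Inside a c T) (hn : NonCross T)
    (hm : (a, b, c) ∈ T)
    (ih : ∀ a' c' : ℤ, c' - a' < c - a → a' < c' → ∀ T, Inside a' c' T → NonCross T → Good a' c' T) :
    Good a c T := by
  have h0 := hT _ hm
  simp only at h0
  have hS : Inside a b (T.filter fun t => t.2.2 ≤ b) := by
    intro t ht
    rw [Finset.mem_filter] at ht
    have := hT t ht.1
    omega
  have hR : Inside b c (T.filter fun t => b ≤ t.1) := by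
    intro t ht
    rw [Finset.mem_filter] at ht
    have := hT t ht.1
    omega
  have e : T = ((T.filter fun t => t.2.2 ≤ b) ∪ (T.filter fun t => b ≤ t.1)) ∪ {(a, b, c)} := by
    ext ⟨x, y, z⟩
    simp only [Finset.mem_union, Finset.mem_filter, Finset.mem_singleton]
    constructor
    · intro ht
      by_cases h1 : z ≤ b
      · simp [ht, h1]
      by_cases h2 : b ≤ x
      · simp [ht, h2]
      right
      have h3 := hT _ ht
      simp only at h3
      have c1 := hn _ hm _ ht a b x z (by simp [tEdge]) (by simp [tEdge])
      have c2 := hn _ ht _ hm x z b c (by simp [tEdge]) (by simp [tEdge])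
      have c3 := hn _ hm _ ht a b y z (by simp [tEdge]) (by simp [tEdge])
      have c4 := hn _ ht _ hm x y b c (by simp [tEdge]) (by simp [tEdge])
      simp only [Prod.mk.injEq]
      omega
    · rintro ((h | h) | h)
      · exact h.1
      · exact h.1
      · rw [h]; exact hm
  rw [e]
  refine good_glue a b c (by omega) (by omega) _ _ hS hR
    (ih _ _ (by omega) (by omega) _ hS ?_) (ih _ _ (by omega) (by omega) _ hR ?_)
  · intro s hs t ht
    exact hn s (Finset.mem_filter.1 hs).1 t (Finset.mem_filter.1 ht).1
  · intro s hs t ht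
    exact hn s (Finset.mem_filter.1 hs).1 t (Finset.mem_filter.1 ht).1

lemma exists_apex (a c : ℤ) (hac : a + 2 ≤ c) (T : Finset (ℤ × ℤ × ℤ)) (hT : Inside a c T)
    (hn : NonCross T) (hno : ∀ b, (a, b, c) ∉ T) :
    ∃ b, a < b ∧ b < c ∧ NonCross (insert (a, b, c) T) := by
  classical
  let N := (Finset.Ioo a c).filter (fun x => x = a + 1 ∨ ∃ t ∈ T, tEdge t a x)
  have hNe : N.Nonempty := ⟨a + 1, by simp [N]; omega⟩
  obtain ⟨b, hbN, hbmax⟩ := N.exists_max_image id hNe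
  simp only [N, Finset.mem_filter, Finset.mem_Ioo, id] at hbN hbmax
  obtain ⟨⟨h1, h2⟩, h3⟩ := hbN
  refine ⟨b, h1, h2, ?_⟩
  -- every edge of `T` lies in the interval and does not cross the new triangle
  have hin : ∀ t ∈ T, ∀ x y, tEdge t x y → a ≤ x ∧ x < y ∧ y ≤ c := by
    intro t ht x y h
    have := hT t ht
    unfold tEdge at h
    omega
  have hab : ∀ t ∈ T, ∀ x y, tEdge t x y → ¬ (a < x ∧ x < b ∧ b < y) := by
    intro t ht x y h hx
    rcases h3 with h3 | ⟨s, hs, h3⟩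
    · omega
    · exact hn s hs t ht a b x y h3 h ⟨hx.1, hx.2.1, hx.2.2⟩
  have hbc : ∀ t ∈ T, ∀ x y, tEdge t x y → ¬ (x < b ∧ b < y ∧ y < c) := by
    intro t ht x y h hx
    have h4 := hin t ht x y h
    rcases eq_or_lt_of_le h4.1 with h5 | h5
    · subst h5
      have := hbmax y ⟨⟨h4.2.1, hx.2.2⟩, Or.inr ⟨t, ht, h⟩⟩
      omega
    · exact hab t ht x y h ⟨h5, hx.1, hx.2.1⟩
  intro s hs t ht x y u w hsx htu
  rw [Finset.mem_insert] at hs ht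
  rcases hs with rfl | hs <;> rcases ht with rfl | ht
  · unfold tEdge at hsx htu
    simp only at hsx htu
    omega
  · have k1 := hin t ht _ _ htu
    have k2 := hab t ht _ _ htu
    have k3 := hbc t ht _ _ htu
    unfold tEdge at hsx
    simp only at hsx
    omega
  · have k1 := hin s hs _ _ hsx
    have k2 := hab s hs _ _ hsx
    have k3 := hbc s hs _ _ hsx
    unfold tEdge at htu
    simp only at htu
    omega
  · exact hn s hs t ht x y u w hsx htu

theorem good_main (L : ℕ) : ∀ a c : ℤ, c - a ≤ L → a < c → ∀ T, Inside a c T → NonCross T →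
    Good a c T := by
  induction L with
  | zero => intro a c h1 h2; omega
  | succ L ih =>
    intro a c h1 h2 T hT hn
    have ih' : ∀ a' c' : ℤ, c' - a' < c - a → a' < c' → ∀ T, Inside a' c' T → NonCross T →
        Good a' c' T := fun a' c' h3 h4 => ih a' c' (by push_cast at h1; omega) h4
    by_cases hc : c = a + 1
    · subst hc
      have : T = ∅ := by
        rw [Finset.eq_empty_iff_forall_notMem]
        intro t ht
        have := hT t ht
        omega
      subst this
      simp [Good, tF]
    by_cases hex : ∃ b, (a, b, c) ∈ T
    · obtain ⟨b, hb⟩ := hex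
      exact good_of_tri a b c T hT hn hb ih'
    · push Not at hex
      obtain ⟨b, hb1, hb2, hb3⟩ := exists_apex a c (by omega) T hT hn hex
      have g := good_of_tri a b c (insert (a, b, c) T) (by
        intro t ht
        rw [Finset.mem_insert] at ht
        rcases ht with rfl | ht
        · simp only; omega
        · exact hT t ht) hb3 (Finset.mem_insert_self _ _) ih'
      have g1 := g.1
      rw [Finset.sum_insert (hex b)] at g1
      have hpos : 0 < tA (a, b, c) := by
        simp only [tA]
        have : 0 < b - a := by omega
        have : 0 < c - b := by omega
        have : 0 < c - a := by omega
        positivity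
      exact ⟨by omega, fun h => by omega⟩

/-- points of the standard parabola -/
noncomputable def wP (i : ℕ) : ℝ × ℝ := ((i : ℝ), (i : ℝ) ^ 2)

/-- an affine self map of the plane -/
noncomputable def affM (p0 p1 p2 q0 q1 q2 : ℝ) : (ℝ × ℝ) →ᵃ[ℝ] (ℝ × ℝ) where
  toFun x := (p0, q0) + Matrix.toLin (Module.Basis.finTwoProd ℝ) (Module.Basis.finTwoProd ℝ)
    !![p1, p2; q1, q2] x
  linear := Matrix.toLin (Module.Basis.finTwoProd ℝ) (Module.Basis.finTwoProd ℝ) !![p1, p2; q1, q2]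
  map_vadd' := by
    intro p v
    simp only [vadd_eq_add, map_add]
    abel

lemma affM_apply (p0 p1 p2 q0 q1 q2 : ℝ) (x : ℝ × ℝ) :
    affM p0 p1 p2 q0 q1 q2 x
      = (p0 + (p1 * x.1 + p2 * x.2), q0 + (q1 * x.1 + q2 * x.2)) := by
  change (p0, q0) + Matrix.toLin (Module.Basis.finTwoProd ℝ) (Module.Basis.finTwoProd ℝ)
    !![p1, p2; q1, q2] x = _
  rw [Matrix.toLin_finTwoProd_apply]
  rfl

lemma affM_vol (p0 p1 p2 q0 q1 q2 : ℝ) (s : Set (ℝ × ℝ)) :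
    (volume (affM p0 p1 p2 q0 q1 q2 '' s)).toReal = |p1 * q2 - p2 * q1| * (volume s).toReal := by
  have h : affM p0 p1 p2 q0 q1 q2 '' s = (fun x => (p0, q0) + x) ''
      (Matrix.toLin (Module.Basis.finTwoProd ℝ) (Module.Basis.finTwoProd ℝ)
        !![p1, p2; q1, q2] '' s) := by
    rw [Set.image_image]; rfl
  rw [h, Set.image_add_left, measure_preimage_add, Measure.addHaar_image_linearMap,
    LinearMap.det_toLin, Matrix.det_fin_two_of, ENNReal.toReal_mul,
    ENNReal.toReal_ofReal (abs_nonneg _)]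

/-- area of the standard triangle -/
noncomputable def kap : ℝ := (volume (convexHull ℝ ({(0, 0), (1, 0), (0, 1)} : Set (ℝ × ℝ)))).toReal

lemma hull_finite_lt {s : Set (ℝ × ℝ)} (hs : s.Finite) : volume (convexHull ℝ s) ≠ ⊤ :=
  (hs.isCompact_convexHull ℝ).measure_lt_top.ne

lemma kap_pos : 0 < kap := by
  unfold kap
  refine ENNReal.toReal_pos ?_ (hull_finite_lt (by simp))
  have hsub : Set.Icc (0 : ℝ) (1 / 2) ×ˢ Set.Icc (0 : ℝ) (1 / 2) ⊆
      convexHull ℝ ({(0, 0), (1, 0), (0, 1)} : Set (ℝ × ℝ)) := by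
    rintro ⟨x, y⟩ ⟨⟨hx0, hx1⟩, ⟨hy0, hy1⟩⟩
    simp only at hx0 hx1 hy0 hy1
    have hc := convex_convexHull ℝ ({(0, 0), (1, 0), (0, 1)} : Set (ℝ × ℝ))
    have := hc.sum_mem (t := Finset.univ) (w := ![1 - x - y, x, y])
      (z := ![((0 : ℝ), (0 : ℝ)), (1, 0), (0, 1)]) (by
        intro i _
        fin_cases i <;> simp <;> linarith) (by
        simp [Fin.sum_univ_three]; ring) (by
        intro i _
        apply subset_convexHull
        fin_cases i <;> simp)
    simpa [Fin.sum_univ_three] using this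
  intro h0
  have h1 := measure_mono_null hsub h0
  rw [Measure.volume_eq_prod, Measure.prod_prod, Real.volume_Icc] at h1
  norm_num at h1

lemma tri_vol (A B C : ℝ × ℝ) :
    (volume (convexHull ℝ ({A, B, C} : Set (ℝ × ℝ)))).toReal
      = |(B.1 - A.1) * (C.2 - A.2) - (C.1 - A.1) * (B.2 - A.2)| * kap := by
  have h := affM_vol A.1 (B.1 - A.1) (C.1 - A.1) A.2 (B.2 - A.2) (C.2 - A.2)
    (convexHull ℝ ({(0, 0), (1, 0), (0, 1)} : Set (ℝ × ℝ)))
  rw [AffineMap.image_convexHull] at h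
  unfold kap
  rw [← h]
  congr 3
  simp [Set.image_insert_eq, affM_apply]

lemma tri_vol_wP (a b c : ℕ) (hab : a ≤ b) (hbc : b ≤ c) :
    (volume (convexHull ℝ ({wP a, wP b, wP c} : Set (ℝ × ℝ)))).toReal
      = ((b : ℝ) - a) * (c - b) * (c - a) * kap := by
  rw [tri_vol]
  congr 1
  have h1 : (a : ℝ) ≤ b := by exact_mod_cast hab
  have h2 : (b : ℝ) ≤ c := by exact_mod_cast hbc
  rw [show ((wP b).1 - (wP a).1) * ((wP c).2 - (wP a).2) - ((wP c).1 - (wP a).1) *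
    ((wP b).2 - (wP a).2) = ((b : ℝ) - a) * (c - b) * (c - a) by simp only [wP]; ring]
  exact abs_of_nonneg (mul_nonneg (mul_nonneg (by linarith) (by linarith)) (by linarith))

lemma line_null (k : ℝ) : volume {x : ℝ × ℝ | x.2 = k * x.1} = 0 := by
  let S : Submodule ℝ (ℝ × ℝ) := LinearMap.ker (LinearMap.snd ℝ ℝ ℝ - k • LinearMap.fst ℝ ℝ ℝ)
  have h : {x : ℝ × ℝ | x.2 = k * x.1} = (S : Set (ℝ × ℝ)) := by
    ext x
    simp [S, sub_eq_zero]
  rw [h]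
  apply Measure.addHaar_submodule
  intro ht
  have : ((0 : ℝ), (1 : ℝ)) ∈ S := by rw [ht]; trivial
  simp [S] at this

lemma convex_le (k : ℝ) : Convex ℝ {x : ℝ × ℝ | x.2 ≤ k * x.1} := by
  have := convex_halfSpace_le (𝕜 := ℝ)
    (LinearMap.isLinear (LinearMap.snd ℝ ℝ ℝ - k • LinearMap.fst ℝ ℝ ℝ)) 0
  have h : {x : ℝ × ℝ | x.2 ≤ k * x.1} = {w : ℝ × ℝ | (LinearMap.snd ℝ ℝ ℝ - k • LinearMap.fst ℝ ℝ ℝ) w ≤ 0} := by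
    ext x
    simp
  rw [h]
  exact this

lemma convex_ge (k : ℝ) : Convex ℝ {x : ℝ × ℝ | k * x.1 ≤ x.2} := by
  have := convex_halfSpace_ge (𝕜 := ℝ)
    (LinearMap.isLinear (LinearMap.snd ℝ ℝ ℝ - k • LinearMap.fst ℝ ℝ ℝ)) 0
  have h : {x : ℝ × ℝ | k * x.1 ≤ x.2} = {w : ℝ × ℝ | 0 ≤ (LinearMap.snd ℝ ℝ ℝ - k • LinearMap.fst ℝ ℝ ℝ) w} := by
    ext x
    simp
  rw [h]
  exact this

lemma hull_lower (k : ℕ) :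
    ((k : ℝ) ^ 3 - k) * kap ≤ 3 * (volume (convexHull ℝ (wP '' Set.Iic k))).toReal := by
  induction k with
  | zero => simp
  | succ k ih =>
    have f1 : (wP '' Set.Iic k).Finite := (Set.finite_Iic k).image _
    have f2 : ({wP 0, wP k, wP (k + 1)} : Set (ℝ × ℝ)).Finite := by simp
    have f3 : (wP '' Set.Iic (k + 1)).Finite := (Set.finite_Iic _).image _
    have hsub : convexHull ℝ (wP '' Set.Iic k) ∪ convexHull ℝ {wP 0, wP k, wP (k + 1)} ⊆
        convexHull ℝ (wP '' Set.Iic (k + 1)) := by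
      apply Set.union_subset
      · apply convexHull_mono
        apply Set.image_mono
        exact Set.Iic_subset_Iic.2 (by omega)
      · apply convexHull_mono
        intro x hx
        simp only [Set.mem_insert_iff, Set.mem_singleton_iff] at hx
        rcases hx with rfl | rfl | rfl
        · exact ⟨0, by simp, rfl⟩
        · exact ⟨k, by simp, rfl⟩
        · exact ⟨k + 1, by simp, rfl⟩
    have hd : AEDisjoint volume (convexHull ℝ (wP '' Set.Iic k))
        (convexHull ℝ {wP 0, wP k, wP (k + 1)}) := by
      refine measure_mono_null ?_ (line_null k)
      rintro x ⟨h1, h2⟩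
      have h1' := convexHull_min (t := {x : ℝ × ℝ | x.2 ≤ k * x.1}) (by
        rintro _ ⟨i, hi, rfl⟩
        have : (i : ℝ) ≤ k := by exact_mod_cast hi
        have : (0 : ℝ) ≤ i := by positivity
        simp only [wP, Set.mem_ofPred_eq]
        nlinarith) (convex_le k) h1
      have h2' := convexHull_min (t := {x : ℝ × ℝ | k * x.1 ≤ x.2}) (by
        intro x hx
        simp only [Set.mem_insert_iff, Set.mem_singleton_iff] at hx
        have : (0 : ℝ) ≤ k := by positivity
        rcases hx with rfl | rfl | rfl <;> simp only [wP, Set.mem_ofPred_eq] <;> push_cast <;>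
          nlinarith) (convex_ge k) h2
      simp only [Set.mem_ofPred_eq] at h1' h2' ⊢
      linarith
    have hm : NullMeasurableSet (convexHull ℝ {wP 0, wP k, wP (k + 1)}) volume :=
      (f2.isCompact_convexHull ℝ).isClosed.measurableSet.nullMeasurableSet
    have h4 := measure_mono (μ := volume) hsub
    rw [measure_union₀ hm hd] at h4
    have h5 := ENNReal.toReal_mono (hull_finite_lt f3) h4
    rw [ENNReal.toReal_add (hull_finite_lt f1) (hull_finite_lt f2),
      tri_vol_wP 0 k (k + 1) (by omega) (by omega)] at h5
    push_cast at h5 ⊢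
    nlinarith

lemma wP_mem_hull {x : ℕ} {S : Set ℕ} (h : wP x ∈ convexHull ℝ (wP '' S)) : x ∈ S := by
  by_contra hx
  let ℓ : ℝ × ℝ →ₗ[ℝ] ℝ := LinearMap.snd ℝ ℝ ℝ - (2 * x : ℝ) • LinearMap.fst ℝ ℝ ℝ
  have := convexHull_min (t := {y : ℝ × ℝ | -(x : ℝ) ^ 2 < ℓ y}) (by
    rintro _ ⟨i, hi, rfl⟩
    have hne : (i : ℝ) - x ≠ 0 := by
      intro h
      apply hx
      have : i = x := by exact_mod_cast sub_eq_zero.1 h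
      rwa [← this]
    have := pow_pos (abs_pos.2 hne) 2
    rw [sq_abs] at this
    simp [ℓ, wP]
    nlinarith) (convex_halfSpace_gt ℓ.isLinear _) h
  simp [ℓ, wP] at this
  nlinarith

lemma cross_point {x u y w : ℕ} (h1 : x < u) (h2 : u < y) (h3 : y < w) :
    ∃ P, P ∈ openSegment ℝ (wP x) (wP y) ∧ P ∈ openSegment ℝ (wP u) (wP w) := by
  have h1' : (x : ℝ) < u := by exact_mod_cast h1
  have h2' : (u : ℝ) < y := by exact_mod_cast h2
  have h3' : (y : ℝ) < w := by exact_mod_cast h3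
  have a1 : (0 : ℝ) < u - x := by linarith
  have a2 : (0 : ℝ) < y - u := by linarith
  have a3 : (0 : ℝ) < w - y := by linarith
  have a4 : (0 : ℝ) < w - x := by linarith
  have a5 : (0 : ℝ) < y - x := by linarith
  have a6 : (0 : ℝ) < w - u := by linarith
  have a7 : (0 : ℝ) < u + w - x - y := by linarith
  refine ⟨((y - u) * (w - y) / ((u + w - x - y) * (y - x)) : ℝ) • wP x +
    ((u - x) * (w - x) / ((u + w - x - y) * (y - x)) : ℝ) • wP y, ?_, ?_⟩
  · refine ⟨_, _, by positivity, by positivity, ?_, rfl⟩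
    field_simp
    ring
  · refine ⟨((w - x) * (w - y) / ((u + w - x - y) * (w - u)) : ℝ),
      ((u - x) * (y - u) / ((u + w - x - y) * (w - u)) : ℝ), by positivity, by positivity, ?_, ?_⟩
    · field_simp
      ring
    · simp only [wP, Prod.smul_mk, Prod.mk_add_mk, smul_eq_mul, Prod.mk.injEq]
      constructor
      · field_simp
        ring
      · field_simp
        ring

lemma sum_partial (z : ℕ → ℝ) (m : ℕ) :
    ∑ k ∈ Finset.range m, ∑ i ∈ Finset.range (k + 1), z i
      = ∑ i ∈ Finset.range m, z i * ((m : ℝ) - i) := by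
  induction m with
  | zero => simp
  | succ m ih =>
    rw [Finset.sum_range_succ, ih, Finset.sum_range_succ _ m, Finset.sum_range_succ _ m,
      ← add_assoc, ← Finset.sum_add_distrib]
    congr 1
    · refine Finset.sum_congr rfl fun i _ => ?_
      push_cast; ring
    · push_cast; ring

lemma sum_partial_mul (z : ℕ → ℝ) (m : ℕ) :
    2 * ∑ k ∈ Finset.range m, (∑ i ∈ Finset.range (k + 1), z i) *
        (∑ i ∈ Finset.range (m + 1), z i - ∑ i ∈ Finset.range (k + 1), z i)
      = ∑ i ∈ Finset.range (m + 1), ∑ j ∈ Finset.range (m + 1), z i * z j * |(i : ℝ) - j| := by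
  induction m with
  | zero => simp
  | succ m ih =>
    have e1 : ∑ i ∈ Finset.range (m + 1 + 1), ∑ j ∈ Finset.range (m + 1 + 1),
          z i * z j * |(i : ℝ) - j|
        = ∑ i ∈ Finset.range (m + 1), ∑ j ∈ Finset.range (m + 1), z i * z j * |(i : ℝ) - j|
          + 2 * (z (m + 1) * ∑ i ∈ Finset.range (m + 1), z i * (((m + 1 : ℕ) : ℝ) - i)) := by
      rw [Finset.sum_range_succ]
      have : ∀ i ∈ Finset.range (m + 1), ∑ j ∈ Finset.range (m + 1 + 1), z i * z j * |(i : ℝ) - j|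
          = ∑ j ∈ Finset.range (m + 1), z i * z j * |(i : ℝ) - j|
            + z (m + 1) * (z i * (((m + 1 : ℕ) : ℝ) - i)) := by
        intro i hi
        rw [Finset.sum_range_succ]
        have hi' : (i : ℝ) ≤ ((m + 1 : ℕ) : ℝ) := by
          exact_mod_cast (Finset.mem_range.1 hi).le
        rw [abs_of_nonpos (by linarith : (i : ℝ) - ((m + 1 : ℕ) : ℝ) ≤ 0)]
        ring
      rw [Finset.sum_congr rfl this, Finset.sum_add_distrib, ← Finset.mul_sum,
        Finset.sum_range_succ _ (m + 1)]
      have : ∀ j ∈ Finset.range (m + 1), z (m + 1) * z j * |((m + 1 : ℕ) : ℝ) - j|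
          = z (m + 1) * (z j * (((m + 1 : ℕ) : ℝ) - j)) := by
        intro i hi
        have hi' : (i : ℝ) ≤ ((m + 1 : ℕ) : ℝ) := by
          exact_mod_cast (Finset.mem_range.1 hi).le
        rw [abs_of_nonneg (by linarith : 0 ≤ ((m + 1 : ℕ) : ℝ) - (i : ℝ))]
        ring
      rw [Finset.sum_congr rfl this, ← Finset.mul_sum]
      simp
      ring
    rw [e1, ← ih, ← sum_partial,
      Finset.sum_range_succ (fun k => ∑ i ∈ Finset.range (k + 1), z i) m,
      Finset.sum_range_succ (fun k => (∑ i ∈ Finset.range (k + 1), z i) *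
        (∑ i ∈ Finset.range (m + 1 + 1), z i - ∑ i ∈ Finset.range (k + 1), z i)) m,
      Finset.sum_range_succ z (m + 1)]
    have : ∀ k ∈ Finset.range m, (∑ i ∈ Finset.range (k + 1), z i) *
        (∑ i ∈ Finset.range (m + 1), z i + z (m + 1) - ∑ i ∈ Finset.range (k + 1), z i)
        = (∑ i ∈ Finset.range (k + 1), z i) *
        (∑ i ∈ Finset.range (m + 1), z i - ∑ i ∈ Finset.range (k + 1), z i)
        + z (m + 1) * ∑ i ∈ Finset.range (k + 1), z i := by
      intro k _; ring
    rw [Finset.sum_congr rfl this, Finset.sum_add_distrib, ← Finset.mul_sum]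
    ring

lemma sum_partial_sq (z : ℕ → ℝ) (m : ℕ) (Z : ℝ) (hZ : ∑ i ∈ Finset.range (m + 1), z i = Z) :
    ∑ k ∈ Finset.range m, (∑ i ∈ Finset.range (k + 1), z i - Z / 2) ^ 2
      = m * Z ^ 2 / 4 - (∑ i ∈ Finset.range (m + 1), ∑ j ∈ Finset.range (m + 1),
          z i * z j * |(i : ℝ) - j|) / 2 := by
  rw [← sum_partial_mul, hZ]
  have : ∀ k ∈ Finset.range m, (∑ i ∈ Finset.range (k + 1), z i - Z / 2) ^ 2
      = Z ^ 2 / 4 - (∑ i ∈ Finset.range (k + 1), z i) * (Z - ∑ i ∈ Finset.range (k + 1), z i) := by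
    intro k _; ring
  rw [Finset.sum_congr rfl this, Finset.sum_sub_distrib]
  simp
  ring

lemma abel_sum {E : Type*} [AddCommGroup E] [Module ℝ E] (z : ℕ → ℝ) (f : ℕ → E) (m : ℕ) :
    ∑ i ∈ Finset.range (m + 1), z i • f i = (∑ i ∈ Finset.range (m + 1), z i) • f m
      + ∑ k ∈ Finset.range m, (∑ i ∈ Finset.range (k + 1), z i) • (f k - f (k + 1)) := by
  induction m with
  | zero => simp
  | succ m ih =>
    rw [Finset.sum_range_succ, ih, Finset.sum_range_succ _ (m + 1), Finset.sum_range_succ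
      (fun k => (∑ i ∈ Finset.range (k + 1), z i) • (f k - f (k + 1))) m]
    module

lemma exists_map (n : ℕ) (f : Fin (n + 3) → EuclideanSpace ℝ (Fin (n + 2)))
    (hf : AffineIndependent ℝ f) (Z : ℝ) :
    ∃ M : EuclideanSpace ℝ (Fin (n + 2)) ≃ᵃ[ℝ] EuclideanSpace ℝ (Fin (n + 2)),
      ∀ z : ℕ → ℝ, ∑ i ∈ Finset.range (n + 3), z i = Z →
        ‖M (∑ i : Fin (n + 3), z i • f i)‖ ^ 2
          = ∑ k ∈ Finset.range (n + 2), (∑ i ∈ Finset.range (k + 1), z i - Z / 2) ^ 2 := by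
  let F : ℕ → EuclideanSpace ℝ (Fin (n + 2)) := fun k => f (Fin.ofNat (n + 3) k)
  have hF : ∀ i : Fin (n + 3), F i = f i := by
    intro i
    simp only [F]
    congr 1
    ext
    simp [Nat.mod_eq_of_lt i.2]
  let h : Fin (n + 2) → EuclideanSpace ℝ (Fin (n + 2)) := fun k => F k - F (k + 1)
  have hspan : ⊤ ≤ Submodule.span ℝ (Set.range h) := by
    have htop : affineSpan ℝ (Set.range f) = ⊤ := by
      rw [hf.affineSpan_eq_top_iff_card_eq_finrank_add_one]
      simp
    have hv : vectorSpan ℝ (Set.range f) = ⊤ := by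
      rw [← direction_affineSpan, htop, AffineSubspace.direction_top]
    rw [← hv, vectorSpan_range_eq_span_range_vsub_right ℝ f 0, Submodule.span_le]
    have key : ∀ k : ℕ, k < n + 3 → F k - F 0 ∈ Submodule.span ℝ (Set.range h) := by
      intro k
      induction k with
      | zero => intro _; simp
      | succ k ih =>
        intro hk
        have h1 := ih (by omega)
        have h2 : h ⟨k, by omega⟩ ∈ Submodule.span ℝ (Set.range h) :=
          Submodule.subset_span ⟨_, rfl⟩
        have h3 := Submodule.sub_mem _ h1 h2
        have : F (k + 1) - F 0 = F k - F 0 - h ⟨k, by omega⟩ := by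
          simp only [h]; abel
        rwa [this]
    rintro _ ⟨i, rfl⟩
    have := key i i.2
    rw [hF] at this
    have h0 : F 0 = f 0 := hF 0
    rw [h0] at this
    exact this
  let b := basisOfTopLeSpanOfCardEqFinrank h hspan (by simp)
  let e : EuclideanSpace ℝ (Fin (n + 2)) ≃ₗ[ℝ] EuclideanSpace ℝ (Fin (n + 2)) :=
    b.equiv (EuclideanSpace.basisFun (Fin (n + 2)) ℝ).toBasis (Equiv.refl _)
  have he : ∀ k, e (h k) = EuclideanSpace.single k 1 := by
    intro k
    have : h k = b k := by simp [b]
    rw [this]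
    simp [e]
  let x0 : EuclideanSpace ℝ (Fin (n + 2)) := Z • F (n + 2) + ∑ k, (Z / 2) • h k
  refine ⟨(AffineEquiv.constVAdd ℝ _ (-x0)).trans e.toAffineEquiv, ?_⟩
  intro z hz
  have h1 : ∑ i : Fin (n + 3), z i • f i = ∑ i ∈ Finset.range (n + 3), z i • F i := by
    rw [← Fin.sum_univ_eq_sum_range (fun i => z i • F i)]
    refine Finset.sum_congr rfl fun i _ => ?_
    rw [hF]
  have h2 : -x0 + ∑ i : Fin (n + 3), z i • f i
      = ∑ k : Fin (n + 2), (∑ i ∈ Finset.range (k + 1), z i - Z / 2) • h k := by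
    rw [h1, abel_sum, hz, ← Fin.sum_univ_eq_sum_range (fun k =>
      (∑ i ∈ Finset.range (k + 1), z i) • (F k - F (k + 1)))]
    simp only [x0, sub_smul, Finset.sum_sub_distrib, h]
    abel
  have h3 : ((AffineEquiv.constVAdd ℝ _ (-x0)).trans e.toAffineEquiv)
      (∑ i : Fin (n + 3), z i • f i)
      = ∑ k : Fin (n + 2), (∑ i ∈ Finset.range (k + 1), z i - Z / 2) •
        EuclideanSpace.single k (1 : ℝ) := by
    change e (-x0 + ∑ i : Fin (n + 3), z i • f i) = _
    rw [h2, map_sum]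
    refine Finset.sum_congr rfl fun k _ => ?_
    rw [map_smul, he]
  rw [h3, EuclideanSpace.norm_sq_eq, ← Fin.sum_univ_eq_sum_range
    (fun k => (∑ i ∈ Finset.range (k + 1), z i - Z / 2) ^ 2)]
  refine Finset.sum_congr rfl fun k _ => ?_
  rw [Real.norm_eq_abs, sq_abs]
  congr 1
  simp [Finset.sum_apply, Pi.single_apply]

lemma quad_coeffs (p q : Polynomial ℝ) (hp : p.degree ≤ 2) (hq : q.degree ≤ 2)
    (hind : LinearIndependent ℝ ![p, q, (1 : Polynomial ℝ)]) :
    (∀ t, p.eval t = p.coeff 0 + p.coeff 1 * t + p.coeff 2 * t ^ 2) ∧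
    (∀ t, q.eval t = q.coeff 0 + q.coeff 1 * t + q.coeff 2 * t ^ 2) ∧
    p.coeff 1 * q.coeff 2 - p.coeff 2 * q.coeff 1 ≠ 0 := by
  have ev : ∀ r : Polynomial ℝ, r.degree ≤ 2 → ∀ t, r.eval t
      = r.coeff 0 + r.coeff 1 * t + r.coeff 2 * t ^ 2 := by
    intro r hr t
    have hn : r.natDegree < 3 := by
      have : r.natDegree ≤ 2 := Polynomial.natDegree_le_of_degree_le hr
      omega
    rw [Polynomial.eval_eq_sum_range' hn]
    simp [Finset.sum_range_succ]
  refine ⟨ev p hp, ev q hq, fun hD => ?_⟩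
  rw [Fintype.linearIndependent_iff] at hind
  have key : ∀ α β : ℝ, α * p.coeff 1 + β * q.coeff 1 = 0 → α * p.coeff 2 + β * q.coeff 2 = 0 →
      α = 0 ∧ β = 0 := by
    intro α β h1 h2
    have := hind ![α, β, -(α * p.coeff 0 + β * q.coeff 0)] (by
      apply Polynomial.funext
      intro t
      simp only [Fin.sum_univ_three, Matrix.cons_val_zero, Matrix.cons_val_one, Matrix.cons_val,
        Polynomial.eval_add, Polynomial.eval_smul, ev p hp, ev q hq, Polynomial.eval_one,
        smul_eq_mul, Polynomial.eval_zero]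
      linear_combination t * h1 + t ^ 2 * h2)
    exact ⟨this 0, this 1⟩
  have k1 := key (q.coeff 2) (-p.coeff 2) (by linear_combination hD) (by ring)
  have k2 := key (q.coeff 1) (-p.coeff 1) (by ring) (by linear_combination -hD)
  have k3 := key 1 0 (by linarith [k2.2]) (by linarith [k1.2])
  exact one_ne_zero k3.1

lemma affM_inj (p0 p1 p2 q0 q1 q2 : ℝ) (hD : p1 * q2 - p2 * q1 ≠ 0) :
    Function.Injective (affM p0 p1 p2 q0 q1 q2) := by
  rintro ⟨x, y⟩ ⟨x', y'⟩ h
  simp only [affM_apply, Prod.mk.injEq] at h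
  obtain ⟨h1, h2⟩ := h
  have e1 : (p1 * q2 - p2 * q1) * (x - x') = 0 := by linear_combination q2 * h1 - p2 * h2
  have e2 : (p1 * q2 - p2 * q1) * (y - y') = 0 := by linear_combination p1 * h2 - q1 * h1
  have f1 := (mul_eq_zero.1 e1).resolve_left hD
  have f2 := (mul_eq_zero.1 e2).resolve_left hD
  rw [Prod.mk.injEq]
  constructor <;> linarith

lemma sorted_triple {m : ℕ} (σ : Finset (Fin m)) (h : σ.card = 3) :
    ∃ t : Fin m × Fin m × Fin m, t.1 < t.2.1 ∧ t.2.1 < t.2.2 ∧ σ = {t.1, t.2.1, t.2.2} := by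
  let e := σ.orderEmbOfFin h
  refine ⟨(e 0, e 1, e 2), ?_, ?_, ?_⟩
  · exact e.strictMono (by decide)
  · exact e.strictMono (by decide)
  · have := Finset.image_orderEmbOfFin_univ σ h
    ext x
    simp only [Finset.mem_insert, Finset.mem_singleton]
    constructor
    · intro hx
      rw [← this, Finset.mem_image] at hx
      obtain ⟨i, _, rfl⟩ := hx
      fin_cases i <;> simp [e]
    · rintro (rfl | rfl | rfl) <;> exact Finset.orderEmbOfFin_mem σ h _

lemma hull_image {m : ℕ} (v : Fin m → ℝ × ℝ) (Φ : (ℝ × ℝ) →ᵃ[ℝ] (ℝ × ℝ))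
    (hv : ∀ i : Fin m, v i = Φ (wP i)) (s : Set (Fin m)) :
    convexHull ℝ (v '' s) = Φ '' convexHull ℝ (wP '' (Fin.val '' s)) := by
  rw [AffineMap.image_convexHull, Set.image_image, Set.image_image]
  congr 1
  exact Set.image_congr fun i _ => hv i

lemma no_cross {m : ℕ} (v : Fin m → ℝ × ℝ) (Φ : (ℝ × ℝ) →ᵃ[ℝ] (ℝ × ℝ))
    (hΦ : Function.Injective Φ)
    (hv : ∀ i : Fin m, v i = Φ (wP i)) (T : Finset (Finset (Fin m))) (hT : IsTriangulation v T)
    (σ τ : Finset (Fin m)) (hσ : σ ∈ T) (hτ : τ ∈ T) (x y u w : Fin m) (hx : x ∈ σ) (hy : y ∈ σ)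
    (hu : u ∈ τ) (hw : w ∈ τ) (h1 : x < u) (h2 : u < y) (h3 : y < w) : False := by
  obtain ⟨P, hP1, hP2⟩ := cross_point (x := x) (u := u) (y := y) (w := w) h1 h2 h3
  have hmem : ∀ i, ∀ ρ : Finset (Fin m), i ∈ ρ → v i ∈ convexHull ℝ (v '' (ρ : Set (Fin m))) :=
    fun i ρ hi => subset_convexHull ℝ _ ⟨i, hi, rfl⟩
  have hmem' : ∀ i, ∀ ρ : Finset (Fin m), v i ∈ convexHull ℝ (v '' (ρ : Set (Fin m))) → i ∈ ρ := by
    intro i ρ hi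
    rw [hull_image v Φ hv, hv] at hi
    obtain ⟨Q, hQ, hQ'⟩ := hi
    rw [hΦ hQ'] at hQ
    obtain ⟨j, hj, hji⟩ := wP_mem_hull hQ
    rwa [← Fin.ext hji]
  have hQ1 : Φ P ∈ openSegment ℝ (v x) (v y) := by
    rw [hv, hv, ← image_openSegment]
    exact ⟨P, hP1, rfl⟩
  have hQ2 : Φ P ∈ openSegment ℝ (v u) (v w) := by
    rw [hv, hv, ← image_openSegment]
    exact ⟨P, hP2, rfl⟩
  have hcs := convex_convexHull ℝ (v '' (σ : Set (Fin m)))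
  have hct := convex_convexHull ℝ (v '' (τ : Set (Fin m)))
  have hPσ := hcs.openSegment_subset (hmem x σ hx) (hmem y σ hy) hQ1
  have hPτ := hct.openSegment_subset (hmem u τ hu) (hmem w τ hw) hQ2
  obtain ⟨hE1, hE2⟩ := hT.2.2 σ hσ τ hτ
  have hxτ : x ∈ τ := hmem' x τ
    (hE1.left_mem_of_mem_openSegment (hmem x σ hx) (hmem y σ hy) ⟨hPσ, hPτ⟩ hQ1).2
  have hyτ : y ∈ τ := by
    rw [openSegment_symm] at hQ1
    exact hmem' y τ
      (hE1.left_mem_of_mem_openSegment (hmem y σ hy) (hmem x σ hx) ⟨hPσ, hPτ⟩ hQ1).2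
  have hsub : ({x, u, y, w} : Finset (Fin m)) ⊆ τ := by
    intro i hi
    simp only [Finset.mem_insert, Finset.mem_singleton] at hi
    rcases hi with rfl | rfl | rfl | rfl <;> assumption
  have hc := Finset.card_le_card hsub
  rw [(hT.1 τ hτ).1] at hc
  have h4 : ({x, u, y, w} : Finset (Fin m)).card = 4 := by
    rw [Finset.card_insert_of_notMem, Finset.card_insert_of_notMem, Finset.card_insert_of_notMem,
      Finset.card_singleton] <;> simp only [Finset.mem_insert, Finset.mem_singleton] <;> omega
  omega

lemma tri_data (n : ℕ) (v : Fin (n + 3) → ℝ × ℝ) (p0 p1 p2 q0 q1 q2 : ℝ)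
    (hD : p1 * q2 - p2 * q1 ≠ 0)
    (hv : ∀ i : Fin (n + 3), v i = affM p0 p1 p2 q0 q1 q2 (wP i))
    (T : Finset (Finset (Fin (n + 3)))) (hT : IsTriangulation v T) :
    ∃ T' : Finset (ℤ × ℤ × ℤ), Inside 0 (n + 2) T' ∧ NonCross T' ∧
      ((n + 2 : ℤ) ^ 3 - (n + 2) ≤ 3 * ∑ t ∈ T', tA t) ∧
      ∀ g : ℤ → ℝ, ∑ i : Fin (n + 3), (∑ σ ∈ T.filter (fun σ => i ∈ σ), triArea v σ) * g (i : ℕ)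
        = |p1 * q2 - p2 * q1| * kap * ∑ t ∈ T', (tA t : ℝ) * (g t.1 + g t.2.1 + g t.2.2) := by
  classical
  have hΦ := affM_inj p0 p1 p2 q0 q1 q2 hD
  have hex : ∀ σ, σ ∈ T → ∃ t : Fin (n + 3) × Fin (n + 3) × Fin (n + 3),
      t.1 < t.2.1 ∧ t.2.1 < t.2.2 ∧ σ = {t.1, t.2.1, t.2.2} :=
    fun σ hσ => sorted_triple σ (hT.1 σ hσ).1
  choose! s hs1 hs2 hs3 using hex
  let G : Finset (Fin (n + 3)) → ℤ × ℤ × ℤ := fun σ =>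
    (((s σ).1 : ℕ), ((s σ).2.1 : ℕ), ((s σ).2.2 : ℕ))
  have hinj : Set.InjOn G T := by
    intro σ hσ τ hτ h
    simp only [G, Prod.mk.injEq, Nat.cast_inj, Fin.val_inj] at h
    rw [hs3 σ hσ, hs3 τ hτ, h.1, h.2.1, h.2.2]
  have hedge : ∀ σ ∈ T, ∀ x y, tEdge (G σ) x y → ∃ x' ∈ σ, ∃ y' ∈ σ,
      x = ((x' : ℕ) : ℤ) ∧ y = ((y' : ℕ) : ℤ) := by
    intro σ hσ x y h
    have hm : ∀ i, i = (s σ).1 ∨ i = (s σ).2.1 ∨ i = (s σ).2.2 → i ∈ σ := by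
      intro i hi
      have h3 := hs3 σ hσ
      rw [Finset.ext_iff] at h3
      rw [h3]
      simpa using hi
    have m1 := hm _ (Or.inl rfl)
    have m2 := hm _ (Or.inr (Or.inl rfl))
    have m3 := hm _ (Or.inr (Or.inr rfl))
    rcases h with h | h | h
    · exact ⟨_, m1, _, m2, h⟩
    · exact ⟨_, m1, _, m3, h⟩
    · exact ⟨_, m2, _, m3, h⟩
  have harea : ∀ σ ∈ T, triArea v σ = |p1 * q2 - p2 * q1| * kap * (tA (G σ) : ℝ) := by
    intro σ hσ
    unfold triArea
    rw [hull_image v _ hv, affM_vol]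
    have : wP '' (Fin.val '' (σ : Set (Fin (n + 3))))
        = {wP (s σ).1, wP (s σ).2.1, wP (s σ).2.2} := by
      conv_lhs => rw [hs3 σ hσ]
      simp [Set.image_insert_eq]
    rw [this, tri_vol_wP _ _ _ (hs1 σ hσ).le (hs2 σ hσ).le]
    simp only [tA, G]
    push_cast
    ring
  have hCpos : 0 < |p1 * q2 - p2 * q1| := abs_pos.2 hD
  refine ⟨T.image G, ?_, ?_, ?_, ?_⟩
  · intro t ht
    obtain ⟨σ, hσ, rfl⟩ := Finset.mem_image.1 ht
    have := hs1 σ hσ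
    have := hs2 σ hσ
    have := (s σ).2.2.2
    simp only [G]
    omega
  · intro t ht t' ht' x y u w h h' hc
    obtain ⟨σ, hσ, rfl⟩ := Finset.mem_image.1 ht
    obtain ⟨τ, hτ, rfl⟩ := Finset.mem_image.1 ht'
    obtain ⟨x, hx, y, hy, rfl, rfl⟩ := hedge σ hσ _ _ h
    obtain ⟨u, hu, w, hw, rfl, rfl⟩ := hedge τ hτ _ _ h'
    exact no_cross v _ hΦ hv T hT σ τ hσ hτ x y u w hx hy hu hw (by omega) (by omega) (by omega)
  · rw [Finset.sum_image hinj]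
    have h1 : (volume (convexHull ℝ (Set.range v))).toReal ≤ ∑ σ ∈ T, triArea v σ := by
      rw [← hT.2.1]
      unfold triArea
      rw [← ENNReal.toReal_sum]
      · refine ENNReal.toReal_mono ?_ (measure_biUnion_finset_le _ _)
        rw [ENNReal.sum_ne_top]
        intro σ _
        exact hull_finite_lt (Set.toFinite _)
      · intro σ _
        exact hull_finite_lt (Set.toFinite _)
    rw [← Set.image_univ, hull_image v _ hv, affM_vol, Finset.sum_congr rfl harea,
      ← Finset.mul_sum] at h1
    have h2 := hull_lower (n + 2)
    have h3 : (Fin.val '' (Set.univ : Set (Fin (n + 3)))) = Set.Iic (n + 2) := by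
      ext k
      simp only [Set.image_univ, Set.mem_range, Set.mem_Iic]
      constructor
      · rintro ⟨i, rfl⟩; omega
      · intro h; exact ⟨⟨k, by omega⟩, rfl⟩
    rw [h3, mul_assoc] at h1
    have h4 := le_of_mul_le_mul_left h1 hCpos
    have h5 : (((n + 2 : ℕ) : ℝ) ^ 3 - ((n + 2 : ℕ) : ℝ)) ≤ 3 * ∑ σ ∈ T, (tA (G σ) : ℝ) := by
      refine le_of_mul_le_mul_right (a := kap) ?_ kap_pos
      linarith
    exact_mod_cast h5
  · intro g
    rw [Finset.sum_image hinj, Finset.mul_sum]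
    simp_rw [Finset.sum_filter, Finset.sum_mul]
    rw [Finset.sum_comm]
    refine Finset.sum_congr rfl fun σ hσ => ?_
    have : ∀ i : Fin (n + 3), (if i ∈ σ then triArea v σ else 0) * g ((i : ℕ) : ℤ)
        = if i ∈ σ then triArea v σ * g ((i : ℕ) : ℤ) else 0 := by
      intro i; split_ifs <;> simp
    simp_rw [this]
    rw [Finset.sum_ite_mem, Finset.univ_inter, ← Finset.mul_sum, harea σ hσ]
    have hsum : ∑ i ∈ σ, g ((i : ℕ) : ℤ) = g (G σ).1 + g (G σ).2.1 + g (G σ).2.2 := by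
      conv_lhs => rw [hs3 σ hσ]
      have a1 := hs1 σ hσ
      have a2 := hs2 σ hσ
      rw [Finset.sum_insert (by
          simp only [Finset.mem_insert, Finset.mem_singleton]; omega),
        Finset.sum_insert (by simp only [Finset.mem_singleton]; omega), Finset.sum_singleton]
      simp only [G]
      ring
    rw [hsum]
    ring


/-- For `n+3` equally spaced points on a nondegenerate quadratic plane curve
and any affinely independent choice of vectors `f i` in `ℝ^{n+2}` (the
vertices of an `(n+2)`-simplex), all GKZ vectors of triangulations lie on a
common ellipsoid: some invertible affine map sends them all to a sphere of
radius `r > 0` around the origin. -/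
theorem gkz_on_common_ellipsoid (n : ℕ) (p q : Polynomial ℝ)
    (hp : p.degree ≤ 2) (hq : q.degree ≤ 2)
    (hind : LinearIndependent ℝ ![p, q, (1 : Polynomial ℝ)])
    (a b : ℝ) (hb : b ≠ 0)
    (v : Fin (n + 3) → ℝ × ℝ)
    (hv : ∀ i : Fin (n + 3),
      v i = (p.eval (a + (i : ℕ) * b), q.eval (a + (i : ℕ) * b)))
    (f : Fin (n + 3) → EuclideanSpace ℝ (Fin (n + 2)))
    (hf : AffineIndependent ℝ f) :
    ∃ M : EuclideanSpace ℝ (Fin (n + 2)) ≃ᵃ[ℝ] EuclideanSpace ℝ (Fin (n + 2)),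
      ∃ r : ℝ, 0 < r ∧
        ∀ T : Finset (Finset (Fin (n + 3))), IsTriangulation v T →
          ‖M (GKZ v f T)‖ = r := by
  obtain ⟨ep, eq, hD0⟩ := quad_coeffs p q hp hq hind
  obtain ⟨p0, p1, p2, q0, q1, q2, hD, hv'⟩ : ∃ p0 p1 p2 q0 q1 q2 : ℝ, p1 * q2 - p2 * q1 ≠ 0 ∧
      ∀ i : Fin (n + 3), v i = affM p0 p1 p2 q0 q1 q2 (wP i) := by
    refine ⟨p.coeff 0 + p.coeff 1 * a + p.coeff 2 * a ^ 2,
      p.coeff 1 * b + 2 * p.coeff 2 * a * b, p.coeff 2 * b ^ 2,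
      q.coeff 0 + q.coeff 1 * a + q.coeff 2 * a ^ 2,
      q.coeff 1 * b + 2 * q.coeff 2 * a * b, q.coeff 2 * b ^ 2, ?_, ?_⟩
    · have : b ^ 3 * (p.coeff 1 * q.coeff 2 - p.coeff 2 * q.coeff 1) ≠ 0 :=
        mul_ne_zero (pow_ne_zero _ hb) hD0
      convert this using 1
      ring
    · intro i
      rw [hv, affM_apply, ep, eq]
      simp only [wP, Prod.mk.injEq]
      constructor <;> ring
  have hC : 0 < |p1 * q2 - p2 * q1| * kap := mul_pos (abs_pos.2 hD) kap_pos
  generalize hCdef : |p1 * q2 - p2 * q1| * kap = C at hC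
  obtain ⟨M, hM⟩ := exists_map n f hf (C * ((n + 2 : ℝ) ^ 3 - (n + 2)))
  have hR : 0 < C ^ 2 * (15 * (n + 2 : ℝ) ^ 7 - 42 * (n + 2 : ℝ) ^ 5 + 35 * (n + 2 : ℝ) ^ 3
      - 8 * (n + 2)) / 420 := by
    have : (15 * (n + 2 : ℝ) ^ 7 - 42 * (n + 2 : ℝ) ^ 5 + 35 * (n + 2 : ℝ) ^ 3
      - 8 * (n + 2)) = 840 + (n : ℝ) * 3772 + (n : ℝ) ^ 2 * 6930 + (n : ℝ) ^ 3 * 6755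
        + (n : ℝ) ^ 4 * 3780 + (n : ℝ) ^ 5 * 1218 + (n : ℝ) ^ 6 * 210 + (n : ℝ) ^ 7 * 15 := by ring
    rw [this]
    positivity
  refine ⟨M, Real.sqrt (C ^ 2 * (15 * (n + 2 : ℝ) ^ 7 - 42 * (n + 2 : ℝ) ^ 5
    + 35 * (n + 2 : ℝ) ^ 3 - 8 * (n + 2)) / 420), Real.sqrt_pos.2 hR, ?_⟩
  intro T hT
  obtain ⟨T', hin, hnc, harea, hsum⟩ := tri_data n v p0 p1 p2 q0 q1 q2 hD hv' T hT
  rw [hCdef] at hsum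
  have hg := good_main (n + 2) 0 (n + 2) (by push_cast; omega) (by omega) T' hin hnc
  have hg1 := hg.1
  simp only [sub_zero] at hg1
  have hA : 3 * ∑ t ∈ T', tA t = (n + 2 : ℤ) ^ 3 - (n + 2) := le_antisymm hg1 harea
  have hE := (hg.2 (by simpa using hA)).2
  simp only [sub_zero] at hE
  let z : ℕ → ℝ := fun k => ∑ σ ∈ T.filter (fun σ => Fin.ofNat (n + 3) k ∈ σ), triArea v σ
  have hz : ∀ i : Fin (n + 3), z i = ∑ σ ∈ T.filter (fun σ => i ∈ σ), triArea v σ := by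
    intro i
    have : Fin.ofNat (n + 3) (i : ℕ) = i := by ext; simp
    simp only [z, this]
  have hsum' : ∀ g : ℤ → ℝ, ∑ i ∈ Finset.range (n + 3), z i * g i
      = C * ∑ t ∈ T', (tA t : ℝ) * (g t.1 + g t.2.1 + g t.2.2) := by
    intro g
    rw [← hsum, ← Fin.sum_univ_eq_sum_range (fun i => z i * g i)]
    refine Finset.sum_congr rfl fun i _ => ?_
    rw [hz]
  have hZ : ∑ i ∈ Finset.range (n + 3), z i = C * ((n + 2 : ℝ) ^ 3 - (n + 2)) := by
    have h1 := hsum' (fun _ => 1)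
    simp only [mul_one, ← Finset.sum_mul] at h1
    rw [h1]
    have h2 : (3 * ∑ t ∈ T', (tA t : ℝ)) = (n + 2 : ℝ) ^ 3 - (n + 2) := by exact_mod_cast hA
    rw [← h2]; ring
  have hdist : ∑ i ∈ Finset.range (n + 2 + 1), ∑ j ∈ Finset.range (n + 2 + 1),
      z i * z j * |(i : ℝ) - j| = C ^ 2 * (tF T' T' : ℝ) := by
    have h1 : ∀ i ∈ Finset.range (n + 2 + 1), ∑ j ∈ Finset.range (n + 2 + 1),
        z i * z j * |(i : ℝ) - j| = z i * (C * ∑ t ∈ T', (tA t : ℝ) *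
          (|(i : ℝ) - t.1| + |(i : ℝ) - t.2.1| + |(i : ℝ) - t.2.2|)) := by
      intro i _
      have := hsum' (fun w => |(i : ℝ) - w|)
      rw [← this, Finset.mul_sum]
      refine Finset.sum_congr rfl fun j _ => ?_
      push_cast
      ring
    rw [Finset.sum_congr rfl h1]
    have := hsum' (fun x => C * ∑ t ∈ T', (tA t : ℝ) *
          (|(x : ℝ) - t.1| + |(x : ℝ) - t.2.1| + |(x : ℝ) - t.2.2|))
    simp only [Int.cast_natCast] at this
    rw [this]
    unfold tF tG tV
    push_cast
    rw [pow_two, mul_assoc]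
    congr 1
    rw [Finset.mul_sum]
    refine Finset.sum_congr rfl fun s _ => ?_
    rw [← mul_add, ← mul_add, ← Finset.sum_add_distrib, ← Finset.sum_add_distrib, mul_left_comm,
      Finset.mul_sum]
    congr 1
    refine Finset.sum_congr rfl fun t _ => ?_
    ring
  have hmain := hM z hZ
  rw [sum_partial_sq z (n + 2) _ hZ, hdist] at hmain
  have hgkz : GKZ v f T = ∑ i : Fin (n + 3), z i • f i := by
    unfold GKZ
    refine Finset.sum_congr rfl fun i _ => ?_
    rw [hz]
  rw [hgkz]
  have hE' : (105 * tF T' T' : ℝ) = 4 * (n + 2) + 35 * (n + 2) ^ 3 - 84 * (n + 2) ^ 5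
      + 45 * (n + 2) ^ 7 := by exact_mod_cast hE
  have hE'' : (tF T' T' : ℝ) = (4 * (n + 2) + 35 * (n + 2) ^ 3 - 84 * (n + 2) ^ 5
      + 45 * (n + 2) ^ 7) / 105 := by linarith
  rw [← Real.sqrt_sq (norm_nonneg _), hmain, hE'']
  congr 1
  push_cast
  ring
end
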